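/- arXiv:2310.02190 — 6 statements merged into one kernel-verified Lean document; each statement's English description precedes it below -/
import Mathlib

section
/- Suppose the Markov semigroup P_t satisfies the asymptotic coupling property restricted to the action of 𝓖 on all of X, (rAC)_X. Let μ and ν be Radon probability measures on X which are invariant for P_t and mutually singular (μ ⊥ ν). Then there exist two disjoint sets U₀, U₁ ⊆ X, each open with respect to the topology induced by d_𝓖 and each belonging to the Borel σ-algebra 𝓑(X), such that μ(U₀) = 1, ν(U₀) = 0, μ(U₁) = 0, and ν(U₁) = 1. -/
/-!
The property `(rAC)_X` forbids values near `1` and values near `-1` of the same function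
`P_{t_n} φ` at two points that are close for `d_𝓖`, once `n` is large compared with the
`𝓖`-Lipschitz constant of `φ`.

Let `A` carry `ν` and let its complement carry `μ`. Compact sets `K k ⊆ Aᶜ` and `L k ⊆ A` exhaust
the two measures up to `2⁻ᵏ`. Being compact and disjoint, they are at positive `d_𝓖`-distance by
equicontinuity of the action (`exists_dG_sep`), so truncating `d_𝓖(·, K k)` gives a Borel,
`𝓖`-Lipschitz function `φ k` with values in `[-1, 1]`, equal to `1` on `K k` and `-1` on `L k`
(`exists_GLip_separating`). Borel measurability comes from that of the sets `τ(B_r × K)`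
(`measurable_dGSet`). Put `ψ k = P_{t_{n k}} (φ k)` with `n k` so large that `δ_{n k}` times the
Lipschitz constant is at most `2⁻ᵏ`. Invariance and Borel–Cantelli give `ψ k → 1` `μ`-a.e. and
`ψ k → -1` `ν`-a.e. (`ae_tendsto_zero`), while `(rAC)_X` shows that every point of `{ψ k → ±1}` is
at positive `d_𝓖`-distance from `{ψ k → ∓1}`.

Let `V` and `W` be σ-compact subsets of full measure of these two limit sets. The functions
`d_𝓖(·, V)` and `d_𝓖(·, W)` are Borel and `1`-Lipschitz for `d_𝓖`, so
`U₀ = {d_𝓖(·, V) < d_𝓖(·, W)}` and `U₁ = {d_𝓖(·, W) < d_𝓖(·, V)}` are disjoint, Borel and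
`d_𝓖`-open, and they contain `V` and `W` by the pointwise separation.
-/

open MeasureTheory ENNReal Filter Topology

section

variable {X : Type*} [MetricSpace X] [MeasurableSpace X] [BorelSpace X]
variable {G : Type*} [Group G]

/-- A function `φ : X → ℝ` is bounded and Borel measurable. -/
def IsBddBorel {X : Type*} [MeasurableSpace X] (φ : X → ℝ) : Prop :=
  Measurable φ ∧ ∃ M : ℝ, ∀ x, |φ x| ≤ M

/-- `ℓ` is a length function on the group `G`. -/
structure IsLength (G : Type*) [Group G] (ℓ : G → ℝ) : Prop where
  nonneg : ∀ g, 0 ≤ ℓ g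
  eq_zero_iff : ∀ g, ℓ g = 0 ↔ g = 1
  inv : ∀ g : G, ℓ g⁻¹ = ℓ g
  mul_le : ∀ g₁ g₂, ℓ (g₁ * g₂) ≤ ℓ g₁ + ℓ g₂

/-- `τ` is an action of the group `G` on `X`. -/
structure IsAction {X : Type*} (G : Type*) [Group G] (τ : G → X → X) : Prop where
  one : ∀ x, τ 1 x = x
  mul : ∀ g₁ g₂ x, τ (g₁ * g₂) x = τ g₁ (τ g₂ x)

/-- On every compact set, `g ↦ τ_g x` is equicontinuous at the identity:
`lim_{r → 0} sup_{x ∈ K} sup_{|g| ≤ r} d(x, τ_g x) = 0`. -/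
def TauEquicont (ℓ : G → ℝ) (τ : G → X → X) : Prop :=
  ∀ K : Set X, IsCompact K → ∀ ε : ℝ, 0 < ε →
    ∃ r : ℝ, 0 < r ∧ ∀ x ∈ K, ∀ g : G, ℓ g ≤ r → dist x (τ g x) ≤ ε

/-- The images `τ(B_r × K)` of compact sets are Borel. -/
def TauMeasImage (ℓ : G → ℝ) (τ : G → X → X) : Prop :=
  ∀ r : ℝ, 0 ≤ r → ∀ K : Set X, IsCompact K →
    MeasurableSet (⋃ (g : G) (_ : ℓ g ≤ r), τ g '' K)

/-- `P` is a Markov semigroup on the bounded Borel functions. -/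
structure IsMarkovSemigroup {X : Type*} [MeasurableSpace X]
    (P : ℝ → (X → ℝ) → (X → ℝ)) : Prop where
  preserves : ∀ t, 0 ≤ t → ∀ φ : X → ℝ, IsBddBorel φ → IsBddBorel (P t φ)
  add : ∀ t, 0 ≤ t → ∀ φ ψ : X → ℝ, IsBddBorel φ → IsBddBorel ψ →
    P t (fun x => φ x + ψ x) = fun x => P t φ x + P t ψ x
  smul : ∀ t, 0 ≤ t → ∀ (c : ℝ) (φ : X → ℝ), IsBddBorel φ →
    P t (fun x => c * φ x) = fun x => c * P t φ x
  comp : ∀ t, 0 ≤ t → ∀ s, 0 ≤ s → ∀ φ : X → ℝ, IsBddBorel φ →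
    P (t + s) φ = P t (P s φ)
  pos : ∀ t, 0 ≤ t → ∀ φ : X → ℝ, IsBddBorel φ → (∀ x, 0 ≤ φ x) → ∀ x, 0 ≤ P t φ x
  map_one : ∀ t, 0 ≤ t → P t (fun _ => (1 : ℝ)) = fun _ => 1

/-- The extended distance `d_𝓖` on `X` induced by the group action:
`d_𝓖(u₁,u₂) = inf {|g| : u₁ = τ_g u₂}`, with `inf ∅ = ∞`. -/
noncomputable def dG (ℓ : G → ℝ) (τ : G → X → X) (u₁ u₂ : X) : ℝ≥0∞ :=
  ⨅ (g : G) (_ : u₁ = τ g u₂), ENNReal.ofReal (ℓ g)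

/-- `φ` is `𝓖`-Lipschitz with constant `c`. -/
def GLipWith (ℓ : G → ℝ) (τ : G → X → X) (c : ℝ) (φ : X → ℝ) : Prop :=
  ∀ u₁ u₂ : X, ENNReal.ofReal |φ u₁ - φ u₂| ≤ ENNReal.ofReal c * dG ℓ τ u₁ u₂

/-- A Borel probability measure `μ` is invariant for the Markov semigroup `P`. -/
def IsInvariantMeasure {X : Type*} [MeasurableSpace X]
    (P : ℝ → (X → ℝ) → (X → ℝ)) (μ : Measure X) : Prop :=
  ∀ t, 0 ≤ t → ∀ φ : X → ℝ, IsBddBorel φ → ∫ x, P t φ x ∂μ = ∫ x, φ x ∂μ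

/-- The asymptotic coupling property restricted to the action of `𝓖`, `(rAC)_X`,
with data `t_n`, `δ_n`, `ε₀`, `C`, `r`. -/
structure RAC (ℓ : G → ℝ) (τ : G → X → X) (P : ℝ → (X → ℝ) → (X → ℝ))
    (t : ℕ → ℝ) (δ : ℕ → ℝ) (ε₀ C : X → G → ℝ) (r : X → ℝ≥0∞) : Prop where
  t_nonneg : ∀ n, 0 ≤ t n
  delta_pos : ∀ n, 0 < δ n
  delta_lim : Tendsto δ atTop (𝓝 0)
  r_pos : ∀ u₀, 0 < r u₀
  eps_lt_one : ∀ u₀ g, ENNReal.ofReal (ℓ g) ≤ r u₀ → ε₀ u₀ g < 1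
  estimate : ∀ u₀ g, ENNReal.ofReal (ℓ g) ≤ r u₀ →
    ∀ φ : X → ℝ, IsBddBorel φ → ∀ M : ℝ, (∀ x, |φ x| ≤ M) →
      ∀ c : ℝ, 0 ≤ c → GLipWith ℓ τ c φ → ∀ n,
        |P (t n) φ u₀ - P (t n) φ (τ g u₀)| ≤ 2 * ε₀ u₀ g * M + δ n * C u₀ g * c

/-- Openness with respect to the topology induced by `d_𝓖`. -/
def DGOpen (ℓ : G → ℝ) (τ : G → X → X) (U : Set X) : Prop :=
  ∀ x ∈ U, ∃ ε : ℝ≥0∞, 0 < ε ∧ ∀ y : X, dG ℓ τ y x < ε → y ∈ U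

/-- Closure with respect to the topology induced by `d_𝓖`. -/
def DGClosure (ℓ : G → ℝ) (τ : G → X → X) (A : Set X) : Set X :=
  {x : X | ∀ ε : ℝ≥0∞, 0 < ε → ∃ y ∈ A, dG ℓ τ x y < ε}

set_option linter.unusedSectionVars false

/-- The extended distance `d_𝓖(x, K) = inf_{y ∈ K} d_𝓖(x, y)` to a set, with value `∞` when the
orbit of `x` misses `K`. -/
noncomputable def dGSet (ℓ : G → ℝ) (τ : G → X → X) (K : Set X) (x : X) : ℝ≥0∞ :=
  ⨅ y ∈ K, dG ℓ τ x y

lemma dG_le {ℓ : G → ℝ} {τ : G → X → X} {x y : X} {g : G} (h : x = τ g y) :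
    dG ℓ τ x y ≤ ENNReal.ofReal (ℓ g) :=
  iInf₂_le g h

lemma dG_lt_iff {ℓ : G → ℝ} {τ : G → X → X} {x y : X} {s : ℝ≥0∞} :
    dG ℓ τ x y < s ↔ ∃ g : G, x = τ g y ∧ ENNReal.ofReal (ℓ g) < s := by
  simp [dG, iInf_lt_iff]

lemma dG_comm {ℓ : G → ℝ} {τ : G → X → X} (hℓ : IsLength G ℓ) (hτ : IsAction G τ) (x y : X) :
    dG ℓ τ x y = dG ℓ τ y x := by
  have key : ∀ x y : X, dG ℓ τ y x ≤ dG ℓ τ x y := by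
    intro x y
    refine le_iInf₂ fun g hg => ?_
    rw [← hℓ.inv g]
    refine dG_le ?_
    rw [hg, ← hτ.mul, inv_mul_cancel, hτ.one]
  exact le_antisymm (key _ _) (key _ _)

lemma dG_triangle {ℓ : G → ℝ} {τ : G → X → X} (hℓ : IsLength G ℓ) (hτ : IsAction G τ)
    (x y z : X) : dG ℓ τ x z ≤ dG ℓ τ x y + dG ℓ τ y z := by
  refine le_of_forall_gt fun s hs => ?_
  simp only [dG, ENNReal.iInf_add, ENNReal.add_iInf, iInf_lt_iff] at hs
  obtain ⟨h, hh, g, hg, hs⟩ := hs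
  refine lt_of_le_of_lt (dG_le (g := g * h) ?_) (lt_of_le_of_lt ?_ hs)
  · rw [hτ.mul, ← hh, hg]
  · rw [← ENNReal.ofReal_add (hℓ.nonneg g) (hℓ.nonneg h)]
    exact ENNReal.ofReal_le_ofReal (hℓ.mul_le g h)

lemma dGSet_lt_iff {ℓ : G → ℝ} {τ : G → X → X} {K : Set X} {x : X} {s : ℝ≥0∞} :
    dGSet ℓ τ K x < s ↔ ∃ y ∈ K, dG ℓ τ x y < s := by
  simp [dGSet, iInf_lt_iff]

lemma dGSet_eq_zero {ℓ : G → ℝ} {τ : G → X → X} (hℓ : IsLength G ℓ) (hτ : IsAction G τ)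
    {K : Set X} {x : X} (hx : x ∈ K) : dGSet ℓ τ K x = 0 := by
  refine le_antisymm ((iInf₂_le x hx).trans ?_) zero_le
  refine (dG_le (g := 1) (hτ.one x).symm).trans ?_
  simp [(hℓ.eq_zero_iff 1).2 rfl]

lemma dGSet_le_add {ℓ : G → ℝ} {τ : G → X → X} (hℓ : IsLength G ℓ) (hτ : IsAction G τ)
    (K : Set X) (x y : X) : dGSet ℓ τ K x ≤ dGSet ℓ τ K y + dG ℓ τ x y := by
  refine le_of_forall_gt fun s hs => ?_
  simp only [dGSet, ENNReal.iInf_add, iInf_lt_iff] at hs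
  obtain ⟨z, hz, hs⟩ := hs
  refine dGSet_lt_iff.2 ⟨z, hz, lt_of_le_of_lt (dG_triangle hℓ hτ x y z) ?_⟩
  rwa [add_comm]

/-- The distance to a compact set is Borel: its strict sublevel sets are countable unions of sets
`τ(B_q × K)` with `q` rational. -/
lemma measurable_dGSet {ℓ : G → ℝ} {τ : G → X → X} (hmeas : TauMeasImage ℓ τ)
    {K : Set X} (hK : IsCompact K) : Measurable (dGSet ℓ τ K) := by
  refine measurable_of_Iio fun s => ?_
  have : dGSet ℓ τ K ⁻¹' Set.Iio s =
      ⋃ (q : ℚ) (_ : 0 ≤ q ∧ ENNReal.ofReal q < s), ⋃ (g : G) (_ : ℓ g ≤ q), τ g '' K := by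
    ext x
    simp only [Set.mem_preimage, Set.mem_Iio, dGSet_lt_iff, dG_lt_iff, Set.mem_iUnion,
      Set.mem_image, exists_prop]
    constructor
    · rintro ⟨y, hy, g, rfl, hg⟩
      obtain ⟨q, hq, h1, h2⟩ := ENNReal.lt_iff_exists_rat_btwn.1 hg
      refine ⟨q, ⟨hq, h2⟩, g, ?_, y, hy, rfl⟩
      by_contra! hlt
      exact absurd h1 (not_lt.2 (ENNReal.ofReal_le_ofReal hlt.le))
    · rintro ⟨q, ⟨hq, h2⟩, g, hg, y, hy, rfl⟩
      exact ⟨y, hy, g, rfl, lt_of_le_of_lt (ENNReal.ofReal_le_ofReal hg) h2⟩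
  rw [this]
  refine MeasurableSet.iUnion fun q => MeasurableSet.iUnion fun hq => ?_
  exact hmeas q (by exact_mod_cast hq.1) K hK

lemma measurable_dGSet_iUnion {ℓ : G → ℝ} {τ : G → X → X} (hmeas : TauMeasImage ℓ τ)
    {K : ℕ → Set X} (hK : ∀ k, IsCompact (K k)) : Measurable (dGSet ℓ τ (⋃ k, K k)) := by
  have : dGSet ℓ τ (⋃ k, K k) = fun x => ⨅ k, dGSet ℓ τ (K k) x := by
    ext x
    simp only [dGSet, iInf_iUnion]
  rw [this]
  exact Measurable.iInf fun k => measurable_dGSet hmeas (hK k)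

/-- Disjoint compact sets are at positive `d_𝓖`-distance: a short group element moves the points of
`K` by less than the distance from `K` to `L`. -/
lemma exists_dG_sep {ℓ : G → ℝ} {τ : G → X → X} (hequi : TauEquicont ℓ τ)
    {K L : Set X} (hK : IsCompact K) (hL : IsCompact L) (hKL : Disjoint K L) :
    ∃ ρ : ℝ, 0 < ρ ∧ ∀ x ∈ K, ∀ y ∈ L, ENNReal.ofReal ρ ≤ dG ℓ τ y x := by
  obtain ⟨η, hη, hsep⟩ : ∃ η : ℝ, 0 < η ∧ ∀ x ∈ K, ∀ y ∈ L, η ≤ dist x y := by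
    obtain ⟨e, he, h⟩ := Metric.exists_pos_forall_lt_edist hK hL.isClosed hKL
    refine ⟨e, by exact_mod_cast he, fun x hx y hy => ?_⟩
    have := h x hx y hy
    rw [edist_nndist] at this
    have h2 : e < nndist x y := by exact_mod_cast this
    exact_mod_cast h2.le
  obtain ⟨ρ, hρ, h⟩ := hequi K hK (η / 2) (by positivity)
  refine ⟨ρ, hρ, fun x hx y hy => le_iInf₂ fun g hg => ENNReal.ofReal_le_ofReal ?_⟩
  by_contra! hlt
  have h1 := h x hx g hlt.le
  have h2 := hsep x hx y hy
  rw [← hg] at h1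
  linarith

/-- Disjoint compact sets are separated by a bounded Borel function that is `𝓖`-Lipschitz, namely
`1 - (2 / ρ) * min (d_𝓖(·, K)) ρ` with `ρ` a lower bound for the `d_𝓖`-distance of the two sets. -/
lemma exists_GLip_separating {ℓ : G → ℝ} {τ : G → X → X} (hℓ : IsLength G ℓ)
    (hτ : IsAction G τ) (hequi : TauEquicont ℓ τ) (hmeas : TauMeasImage ℓ τ)
    {K L : Set X} (hK : IsCompact K) (hL : IsCompact L) (hKL : Disjoint K L) :
    ∃ (φ : X → ℝ) (c : ℝ), Measurable φ ∧ (∀ x, |φ x| ≤ 1) ∧ (∀ x ∈ K, φ x = 1) ∧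
      (∀ x ∈ L, φ x = -1) ∧ 0 ≤ c ∧ GLipWith ℓ τ c φ := by
  obtain ⟨ρ, hρ, hsep⟩ := exists_dG_sep hequi hK hL hKL
  set D : X → ℝ≥0∞ := fun x => min (dGSet ℓ τ K x) (ENNReal.ofReal ρ) with hD
  have hDtop : ∀ x, D x ≠ ⊤ := fun x => ne_top_of_le_ne_top ENNReal.ofReal_ne_top (min_le_right _ _)
  have hDle : ∀ x, (D x).toReal ≤ ρ := fun x =>
    ENNReal.toReal_le_of_le_ofReal hρ.le (min_le_right _ _)
  have hDadd : ∀ x y, D x ≤ D y + dG ℓ τ x y := by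
    intro x y
    rw [hD]
    simp only [← min_add_add_right]
    exact min_le_min (dGSet_le_add hℓ hτ K x y) le_self_add
  have hDabs : ∀ x y, dG ℓ τ x y ≠ ⊤ → |(D x).toReal - (D y).toReal| ≤ (dG ℓ τ x y).toReal := by
    intro x y h
    have h1 := ENNReal.toReal_mono (ENNReal.add_ne_top.2 ⟨hDtop y, h⟩) (hDadd x y)
    have h' : dG ℓ τ y x ≠ ⊤ := by rwa [dG_comm hℓ hτ]
    have h2 := ENNReal.toReal_mono (ENNReal.add_ne_top.2 ⟨hDtop x, h'⟩) (hDadd y x)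
    rw [ENNReal.toReal_add (hDtop _) h] at h1
    rw [ENNReal.toReal_add (hDtop _) h', dG_comm hℓ hτ] at h2
    rw [abs_le]
    constructor <;> linarith
  have hc : 0 < 2 / ρ := by positivity
  refine ⟨fun x => 1 - 2 / ρ * (D x).toReal, 2 / ρ, ?_, ?_, ?_, ?_, hc.le, ?_⟩
  · have : Measurable D := (measurable_dGSet hmeas hK).min measurable_const
    fun_prop
  · intro x
    have h1 : 2 / ρ * (D x).toReal ≤ 2 / ρ * ρ := mul_le_mul_of_nonneg_left (hDle x) hc.le
    have h2 : 0 ≤ 2 / ρ * (D x).toReal := mul_nonneg hc.le ENNReal.toReal_nonneg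
    rw [div_mul_cancel₀ _ hρ.ne'] at h1
    rw [abs_le]
    constructor <;> linarith
  · intro x hx
    simp [hD, dGSet_eq_zero hℓ hτ hx]
  · intro x hx
    have : D x = ENNReal.ofReal ρ := min_eq_right (le_iInf₂ fun y hy => hsep y hy x hx)
    simp only [this, ENNReal.toReal_ofReal hρ.le]
    rw [div_mul_cancel₀ _ hρ.ne']
    norm_num
  · intro x y
    by_cases h : dG ℓ τ x y = ⊤
    · rw [h, ENNReal.mul_top (by simpa using hc)]
      exact le_top
    · rw [← ENNReal.ofReal_toReal h, ← ENNReal.ofReal_mul hc.le]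
      refine ENNReal.ofReal_le_ofReal ?_
      have : (1 - 2 / ρ * (D x).toReal) - (1 - 2 / ρ * (D y).toReal)
          = -(2 / ρ * ((D x).toReal - (D y).toReal)) := by ring
      rw [this, abs_neg, abs_mul, abs_of_pos hc]
      exact mul_le_mul_of_nonneg_left (hDabs x y h) hc.le

/-- Invariance turns the smallness of the sets `(K k)ᶜ`, outside of which `f k` vanishes, into
summability of the integrals of `P_{s k} (f k)`, hence into almost everywhere convergence. -/
lemma ae_tendsto_zero {P : ℝ → (X → ℝ) → (X → ℝ)} (hP : IsMarkovSemigroup P)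
    (m : Measure X) [IsProbabilityMeasure m] (hm : IsInvariantMeasure P m)
    (s : ℕ → ℝ) (hs : ∀ k, 0 ≤ s k) (f : ℕ → X → ℝ) (hf : ∀ k, Measurable (f k))
    (hf0 : ∀ k x, 0 ≤ f k x) (hf2 : ∀ k x, f k x ≤ 2)
    (K : ℕ → Set X) (hK : ∀ k, MeasurableSet (K k)) (hfK : ∀ k, ∀ x ∈ K k, f k x = 0)
    (hmK : ∀ k, m (K k)ᶜ ≤ 2⁻¹ ^ k) :
    ∀ᵐ x ∂m, Tendsto (fun k => P (s k) (f k) x) atTop (𝓝 0) := by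
  have hbdd : ∀ k, IsBddBorel (f k) := fun k =>
    ⟨hf k, 2, fun x => by rw [abs_of_nonneg (hf0 k x)]; exact hf2 k x⟩
  have hPb : ∀ k, IsBddBorel (P (s k) (f k)) := fun k => hP.preserves _ (hs k) _ (hbdd k)
  have hP0 : ∀ k x, 0 ≤ P (s k) (f k) x := fun k => hP.pos _ (hs k) _ (hbdd k) (hf0 k)
  have hintble : ∀ φ : X → ℝ, IsBddBorel φ → Integrable φ m := by
    rintro φ ⟨h1, M, h2⟩
    exact Integrable.of_bound h1.aestronglyMeasurable M (ae_of_all _ h2)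
  have hle : ∀ k, ∫⁻ x, ENNReal.ofReal (P (s k) (f k) x) ∂m ≤ 2 * 2⁻¹ ^ k := by
    intro k
    rw [← ofReal_integral_eq_lintegral_ofReal (hintble _ (hPb k)) (ae_of_all _ (hP0 k)),
      hm _ (hs k) _ (hbdd k),
      ofReal_integral_eq_lintegral_ofReal (hintble _ (hbdd k)) (ae_of_all _ (hf0 k))]
    calc ∫⁻ x, ENNReal.ofReal (f k x) ∂m
        ≤ ∫⁻ x, (K k)ᶜ.indicator (fun _ => 2) x ∂m := by
          refine lintegral_mono fun x => ?_
          by_cases hx : x ∈ K k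
          · simp [hfK k x hx]
          · rw [Set.indicator_of_mem (by exact hx)]
            exact (ENNReal.ofReal_le_ofReal (hf2 k x)).trans (by simp)
      _ = 2 * m (K k)ᶜ := lintegral_indicator_const (hK k).compl 2
      _ ≤ 2 * 2⁻¹ ^ k := by gcongr; exact hmK k
  have hsum : ∫⁻ x, ∑' k, ENNReal.ofReal (P (s k) (f k) x) ∂m ≠ ⊤ := by
    rw [lintegral_tsum fun k => (hPb k).1.ennreal_ofReal.aemeasurable]
    refine ne_top_of_le_ne_top ?_ (ENNReal.tsum_le_tsum hle)
    rw [ENNReal.tsum_mul_left, ENNReal.tsum_geometric]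
    simp [ENNReal.mul_eq_top]
  have hae := ae_lt_top (Measurable.tsum fun k => (hPb k).1.ennreal_ofReal) hsum
  filter_upwards [hae] with x hx
  have h1 := (ENNReal.tendsto_toReal ENNReal.zero_ne_top).comp
    (ENNReal.tendsto_atTop_zero_of_tsum_ne_top hx.ne)
  refine h1.congr fun k => ?_
  simp [ENNReal.toReal_ofReal (hP0 k x)]

/-- Both distances are `1`-Lipschitz for `d_𝓖`, so moving by less than half of a gap between them
keeps the strict inequality, also when `d_𝓖(·, W)` is infinite. -/
lemma dGOpen_lt {ℓ : G → ℝ} {τ : G → X → X} (hℓ : IsLength G ℓ) (hτ : IsAction G τ)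
    (V W : Set X) : DGOpen ℓ τ {x | dGSet ℓ τ V x < dGSet ℓ τ W x} := by
  intro x hx
  obtain ⟨e, he, hlt⟩ := ENNReal.lt_iff_exists_add_pos_lt.1 (Set.mem_ofPred.1 hx)
  refine ⟨(e : ℝ≥0∞) / 2, ENNReal.half_pos (by exact_mod_cast he.ne'), fun y hy => ?_⟩
  by_contra hcon
  have hle : dGSet ℓ τ W y ≤ dGSet ℓ τ V y := not_lt.1 hcon
  have h1 := dGSet_le_add hℓ hτ V y x
  have h2 := dGSet_le_add hℓ hτ W x y
  rw [dG_comm hℓ hτ] at h2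
  refine absurd hlt (not_lt.2 ?_)
  calc dGSet ℓ τ W x ≤ dGSet ℓ τ W y + dG ℓ τ y x := h2
    _ ≤ (dGSet ℓ τ V x + dG ℓ τ y x) + dG ℓ τ y x := by gcongr; exact hle.trans h1
    _ ≤ (dGSet ℓ τ V x + e / 2) + e / 2 := by gcongr
    _ = dGSet ℓ τ V x + e := by rw [add_assoc, ENNReal.add_halves]

/-- A set of full measure for a Radon measure contains a σ-compact set of full measure, presented as
a union of compact sets `K k` each of which misses mass at most `2⁻ᵏ`. -/
lemma exists_sigmaCompact (m : Measure X) [IsProbabilityMeasure m]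
    (hreg : m.InnerRegular) {A : Set X} (hA : MeasurableSet A) (hmA : m Aᶜ = 0) :
    ∃ K : ℕ → Set X, (∀ k, IsCompact (K k)) ∧ (∀ k, K k ⊆ A) ∧
      (∀ k, m (K k)ᶜ ≤ 2⁻¹ ^ k) ∧ m (⋃ k, K k)ᶜ = 0 := by
  have : ∀ k : ℕ, ∃ K, K ⊆ A ∧ IsCompact K ∧ m (A \ K) < 2⁻¹ ^ k := fun k =>
    hA.exists_isCompact_sdiff_lt (measure_ne_top _ _) (by simp)
  choose K hKA hKc hKm using this
  have hle : ∀ k, m (K k)ᶜ ≤ 2⁻¹ ^ k := by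
    intro k
    calc m (K k)ᶜ ≤ m (Aᶜ ∪ A \ K k) := measure_mono fun x hx => by
          by_cases h : x ∈ A
          · exact Or.inr ⟨h, hx⟩
          · exact Or.inl h
      _ ≤ m Aᶜ + m (A \ K k) := measure_union_le _ _
      _ ≤ 2⁻¹ ^ k := by rw [hmA, zero_add]; exact (hKm k).le
  refine ⟨K, hKc, hKA, hle, ?_⟩
  have hlim : Tendsto (fun k : ℕ => (2⁻¹ : ℝ≥0∞) ^ k) atTop (𝓝 0) :=
    ENNReal.tendsto_pow_atTop_nhds_zero_of_lt_one (by simp)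
  refine le_antisymm (ge_of_tendsto' hlim fun k => ?_) zero_le
  exact (measure_mono (Set.compl_subset_compl.2 (Set.subset_iUnion K k))).trans (hle k)

/-- Under `(rAC)_X`, a point at which `P_{t_{n k}} (φ k)` tends to `a` is at positive distance from
the points at which it tends to `b`, as soon as `|a - b| ≥ 2`. -/
lemma dGSet_pos {ℓ : G → ℝ} {τ : G → X → X} {P : ℝ → (X → ℝ) → (X → ℝ)}
    {t δ : ℕ → ℝ} {ε₀ C : X → G → ℝ} {r : X → ℝ≥0∞}
    (hℓ : IsLength G ℓ) (hτ : IsAction G τ) (hrac : RAC ℓ τ P t δ ε₀ C r)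
    {φ : ℕ → X → ℝ} {c : ℕ → ℝ} {n : ℕ → ℕ}
    (hφ : ∀ k, IsBddBorel (φ k)) (hφ1 : ∀ k x, |φ k x| ≤ 1) (hc : ∀ k, 0 ≤ c k)
    (hlip : ∀ k, GLipWith ℓ τ (c k) (φ k))
    (hn : Tendsto (fun k => δ (n k) * c k) atTop (𝓝 0))
    {a b : ℝ} (hab : 2 ≤ |a - b|) {x : X}
    (hx : Tendsto (fun k => P (t (n k)) (φ k) x) atTop (𝓝 a)) {W : Set X}
    (hW : ∀ y ∈ W, Tendsto (fun k => P (t (n k)) (φ k) y) atTop (𝓝 b)) :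
    0 < dGSet ℓ τ W x := by
  refine lt_of_lt_of_le (hrac.r_pos x) (not_lt.1 fun hlt => ?_)
  obtain ⟨y, hy, hlt⟩ := dGSet_lt_iff.1 hlt
  rw [dG_comm hℓ hτ] at hlt
  obtain ⟨g, rfl, hg⟩ := dG_lt_iff.1 hlt
  have hε := hrac.eps_lt_one x g hg.le
  have hl := (hx.sub (hW _ hy)).abs
  have hr : Tendsto (fun k => 2 * ε₀ x g * 1 + C x g * (δ (n k) * c k)) atTop
      (𝓝 (2 * ε₀ x g * 1 + C x g * 0)) := (hn.const_mul _).const_add _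
  have := le_of_tendsto_of_tendsto' hl hr fun k => by
    have := hrac.estimate x g hg.le (φ k) (hφ k) 1 (hφ1 k) (c k) (hc k) (hlip k) (n k)
    linarith
  linarith

/-- Support theorem I (Theorem 2.9 (supp1), main part): if `P_t` satisfies `(rAC)_X` and
`μ ⊥ ν` are invariant Radon probability measures, there are disjoint `d_𝓖`-open Borel sets
`U₀, U₁` with `μ(U₀) = 1`, `ν(U₀) = 0`, `μ(U₁) = 0`, `ν(U₁) = 1`. -/
theorem support_theorem_I
    (ℓ : G → ℝ) (τ : G → X → X) (hℓ : IsLength G ℓ) (hτ : IsAction G τ)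
    (hequi : TauEquicont ℓ τ) (hmeas : TauMeasImage ℓ τ)
    (P : ℝ → (X → ℝ) → (X → ℝ)) (hP : IsMarkovSemigroup P)
    (t δ : ℕ → ℝ) (ε₀ C : X → G → ℝ) (r : X → ℝ≥0∞)
    (hrac : RAC ℓ τ P t δ ε₀ C r)
    (μ ν : Measure X) [IsProbabilityMeasure μ] [IsProbabilityMeasure ν]
    (hμreg : μ.InnerRegular) (hνreg : ν.InnerRegular)
    (hμinv : IsInvariantMeasure P μ) (hνinv : IsInvariantMeasure P ν)
    (hsing : μ ⟂ₘ ν) :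
    ∃ U₀ U₁ : Set X, Disjoint U₀ U₁ ∧
      DGOpen ℓ τ U₀ ∧ DGOpen ℓ τ U₁ ∧
      MeasurableSet U₀ ∧ MeasurableSet U₁ ∧
      μ U₀ = 1 ∧ ν U₀ = 0 ∧ μ U₁ = 0 ∧ ν U₁ = 1 := by
  obtain ⟨A, hA, hμA, hνA⟩ := hsing
  -- The mutually singular decomposition is stated with `μ A = 0`, so `Aᶜ` carries `μ`.
  obtain ⟨K, hKc, hKA, hKm, -⟩ := exists_sigmaCompact μ hμreg hA.compl (by rwa [compl_compl])
  obtain ⟨L, hLc, hLA, hLm, -⟩ := exists_sigmaCompact ν hνreg hA hνA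
  have hKL : ∀ k, Disjoint (K k) (L k) := fun k =>
    (disjoint_compl_left (a := A)).mono (hKA k) (hLA k)
  choose φ c hφm hφ1 hφK hφL hc hlip using fun k =>
    exists_GLip_separating hℓ hτ hequi hmeas (hKc k) (hLc k) (hKL k)
  have hφ : ∀ k, IsBddBorel (φ k) := fun k => ⟨hφm k, 1, hφ1 k⟩
  have hex : ∀ k : ℕ, ∃ n, δ n * c k < (1 / 2 : ℝ) ^ k := fun k => by
    have h : Tendsto (fun n => δ n * c k) atTop (𝓝 (0 * c k)) := hrac.delta_lim.mul_const _
    rw [zero_mul] at h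
    exact (h.eventually_lt_const (by positivity)).exists
  choose n hn using hex
  have hnlim : Tendsto (fun k => δ (n k) * c k) atTop (𝓝 0) :=
    squeeze_zero (fun k => mul_nonneg (hrac.delta_pos _).le (hc k)) (fun k => (hn k).le)
      (tendsto_pow_atTop_nhds_zero_of_lt_one (by norm_num) (by norm_num))
  have ht : ∀ k, 0 ≤ t (n k) := fun k => hrac.t_nonneg _
  set ψ : ℕ → X → ℝ := fun k => P (t (n k)) (φ k) with hψ
  have hψm : ∀ k, Measurable (ψ k) := fun k => (hP.preserves _ (ht k) _ (hφ k)).1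
  have hone : IsBddBorel (fun _ : X => (1 : ℝ)) := ⟨measurable_const, 1, by simp⟩
  have hPadd : ∀ (k : ℕ) (s : ℝ) (x : X),
      P (t (n k)) (fun x => 1 + s * φ k x) x = 1 + s * ψ k x := by
    intro k s x
    have hs : IsBddBorel (fun x => s * φ k x) := by
      refine ⟨(hφm k).const_mul s, |s|, fun x => ?_⟩
      rw [abs_mul]
      exact mul_le_of_le_one_right (abs_nonneg s) (hφ1 k x)
    rw [hP.add _ (ht k) _ _ hone hs, hP.map_one _ (ht k), hP.smul _ (ht k) s _ (hφ k)]
  have hμlim : ∀ᵐ x ∂μ, Tendsto (fun k => ψ k x) atTop (𝓝 1) := by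
    have := ae_tendsto_zero hP μ hμinv (fun k => t (n k)) ht (fun k x => 1 + (-1) * φ k x)
      (fun k => by have := hφm k; fun_prop)
      (fun k x => by have := abs_le.1 (hφ1 k x); linarith)
      (fun k x => by have := abs_le.1 (hφ1 k x); linarith)
      K (fun k => (hKc k).measurableSet) (fun k x hx => by simp [hφK k x hx]) hKm
    filter_upwards [this] with x hx
    simp only [hPadd] at hx
    have h := hx.const_sub 1
    rw [sub_zero] at h
    exact h.congr fun k => by ring
  have hνlim : ∀ᵐ x ∂ν, Tendsto (fun k => ψ k x) atTop (𝓝 (-1)) := by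
    have := ae_tendsto_zero hP ν hνinv (fun k => t (n k)) ht (fun k x => 1 + 1 * φ k x)
      (fun k => by have := hφm k; fun_prop)
      (fun k x => by have := abs_le.1 (hφ1 k x); linarith)
      (fun k x => by have := abs_le.1 (hφ1 k x); linarith)
      L (fun k => (hLc k).measurableSet) (fun k x hx => by simp [hφL k x hx]) hLm
    filter_upwards [this] with x hx
    simp only [hPadd] at hx
    have h := hx.sub_const 1
    rw [zero_sub] at h
    exact h.congr fun k => by ring
  have hVm : ∀ a : ℝ, MeasurableSet {x | Tendsto (fun k => ψ k x) atTop (𝓝 a)} := fun a =>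
    measurableSet_tendsto (𝓝 a) hψm
  obtain ⟨V, hVc, hV, -, hμV⟩ := exists_sigmaCompact μ hμreg (hVm 1) hμlim
  obtain ⟨W, hWc, hW, -, hνW⟩ := exists_sigmaCompact ν hνreg (hVm (-1)) hνlim
  have hV' : ∀ x ∈ ⋃ k, V k, Tendsto (fun k => ψ k x) atTop (𝓝 1) := fun x hx =>
    Set.iUnion_subset hV hx
  have hW' : ∀ x ∈ ⋃ k, W k, Tendsto (fun k => ψ k x) atTop (𝓝 (-1)) := fun x hx =>
    Set.iUnion_subset hW hx
  have hdV := measurable_dGSet_iUnion hmeas hVc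
  have hdW := measurable_dGSet_iUnion hmeas hWc
  set U₀ : Set X := {x | dGSet ℓ τ (⋃ k, V k) x < dGSet ℓ τ (⋃ k, W k) x} with hU₀
  set U₁ : Set X := {x | dGSet ℓ τ (⋃ k, W k) x < dGSet ℓ τ (⋃ k, V k) x} with hU₁
  have hVU : ⋃ k, V k ⊆ U₀ := fun x hx => by
    rw [hU₀, Set.mem_ofPred, dGSet_eq_zero hℓ hτ hx]
    exact dGSet_pos hℓ hτ hrac hφ hφ1 hc hlip hnlim (by norm_num) (hV' x hx) hW'
  have hWU : ⋃ k, W k ⊆ U₁ := fun x hx => by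
    rw [hU₁, Set.mem_ofPred, dGSet_eq_zero hℓ hτ hx]
    exact dGSet_pos hℓ hτ hrac hφ hφ1 hc hlip hnlim (by norm_num) (hW' x hx) hV'
  have hdisj : Disjoint U₀ U₁ := Set.disjoint_left.2 fun x h0 h1 =>
    lt_asymm (Set.mem_ofPred.1 h0) (Set.mem_ofPred.1 h1)
  have hm₀ : MeasurableSet U₀ := measurableSet_lt hdV hdW
  have hm₁ : MeasurableSet U₁ := measurableSet_lt hdW hdV
  have hμ₀ : μ U₀ᶜ = 0 := measure_mono_null (Set.compl_subset_compl.2 hVU) hμV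
  have hν₁ : ν U₁ᶜ = 0 := measure_mono_null (Set.compl_subset_compl.2 hWU) hνW
  exact ⟨U₀, U₁, hdisj, dGOpen_lt hℓ hτ _ _, dGOpen_lt hℓ hτ _ _, hm₀, hm₁,
    (prob_compl_eq_zero_iff hm₀).1 hμ₀,
    measure_mono_null hdisj.subset_compl_right hν₁,
    measure_mono_null hdisj.subset_compl_left hμ₀,
    (prob_compl_eq_zero_iff hm₁).1 hν₁⟩

end
end

section
/- Suppose the Markov semigroup P_t satisfies (rAC)_X with r(u₀) = ∞ for every u₀ ∈ X. Let μ and ν be Radon probability measures on X which are invariant for P_t and mutually singular. Then there exists a Borel set U₀ ⊆ X which is 𝓖-invariant, i.e. τ(𝓖 × U₀) = U₀, such that μ(U₀) = 1 and ν(U₀) = 0 (equivalently, ν(U₀ᶜ) = 1 with U₀ᶜ also 𝓖-invariant). -/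
/-!
The idea is to separate `μ` and `ν` by test functions that are Lipschitz for `dG`, and let the
asymptotic coupling turn that separation into a separation of orbits.

For a compact set `K` let `orbitDist K u` be the `dG`-distance from `u` to `K`. It is Borel because
its strict sublevel sets are countable unions of the sets `τ(B_q × K)`, and it vanishes exactly
on `K`, because `τ_g` moves points of `K` little when `ℓ g` is small. Hence the bumps
`max(0, 1 - c · orbitDist K)` are `𝓖`-Lipschitz with constant `c` and decrease to the indicator of
`K` as `c → ∞`. By inner regularity and mutual singularity, differences of two such bumps give
functions `|f_j| ≤ 1` with `∫ f_j ∂μ` as close to `1` and `∫ f_j ∂ν` as close to `-1` as desired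
(`exists_separating`); the index `n_j` is chosen afterwards, so large that `δ (n_j)` times the
Lipschitz constant of `f_j` is small.

Since `|P_{t (n_j)} f_j| ≤ 1`, invariance of the measures and summability of the errors show that
`P_{t (n_j)} f_j` tends to `1` `μ`-almost everywhere and to `-1` `ν`-almost everywhere. No orbit
contains points `u` and `τ_g u` of both convergence sets: the difference of the two values would
tend to `2`, while `(rAC)_X` bounds it asymptotically by `2 ε₀(u, g) < 2`. Saturating a `σ`-compact
subset of full `μ`-measure of the first convergence set yields a Borel invariant set, since the
saturation is a countable union of sets `τ(B_n × K)`.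
-/

open MeasureTheory ENNReal Filter Topology

section

variable {X : Type*} [MetricSpace X] [MeasurableSpace X] [BorelSpace X]
variable {G : Type*} [Group G]

set_option linter.unusedSectionVars false

/-! ### Orbit distance to a compact set -/

/-- The `dG`-distance from a point to `K`, with value `∞` when the orbit of the point misses `K`. -/
noncomputable def orbitDist {X : Type*} {G : Type*} [Group G] (ℓ : G → ℝ) (τ : G → X → X)
    (K : Set X) (u : X) : ℝ≥0∞ :=
  ⨅ (g : G) (_ : u ∈ τ g '' K), ENNReal.ofReal (ℓ g)

/-- The bump `max(0, 1 - c · orbitDist K)`; the truncation at `0` is that of subtraction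
in `ℝ≥0∞`. -/
noncomputable def orbitBump {X : Type*} {G : Type*} [Group G] (ℓ : G → ℝ) (τ : G → X → X)
    (K : Set X) (c : ℝ) (u : X) : ℝ :=
  (1 - ENNReal.ofReal c * orbitDist ℓ τ K u).toReal

lemma orbitDist_lt_iff (ℓ : G → ℝ) (τ : G → X → X) (K : Set X) (u : X) (a : ℝ≥0∞) :
    orbitDist ℓ τ K u < a ↔ ∃ g : G, u ∈ τ g '' K ∧ ENNReal.ofReal (ℓ g) < a := by
  simp only [orbitDist, iInf_lt_iff, exists_prop]

lemma measurable_orbitDist {ℓ : G → ℝ} {τ : G → X → X} (hmeas : TauMeasImage ℓ τ)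
    {K : Set X} (hK : IsCompact K) : Measurable (orbitDist ℓ τ K) := by
  refine measurable_of_Iio fun a => ?_
  have h : orbitDist ℓ τ K ⁻¹' Set.Iio a
      = ⋃ (q : ℚ) (_ : 0 ≤ q ∧ ENNReal.ofReal (q : ℝ) < a),
          ⋃ (g : G) (_ : ℓ g ≤ (q : ℝ)), τ g '' K := by
    ext u
    simp only [Set.mem_preimage, Set.mem_Iio, orbitDist_lt_iff, Set.mem_iUnion, exists_prop]
    constructor
    · rintro ⟨g, hg, hlt⟩
      obtain ⟨q, hq0, h1, h2⟩ := ENNReal.lt_iff_exists_rat_btwn.1 hlt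
      refine ⟨q, ⟨hq0, h2⟩, g, ?_, hg⟩
      by_contra! hlt'
      exact absurd (ENNReal.ofReal_le_ofReal hlt'.le) (not_le.2 h1)
    · rintro ⟨q, ⟨_, h2⟩, g, hgq, hg⟩
      exact ⟨g, hg, (ENNReal.ofReal_le_ofReal hgq).trans_lt h2⟩
  rw [h]
  refine MeasurableSet.iUnion fun q => MeasurableSet.iUnion fun hq => ?_
  exact hmeas q (by exact_mod_cast hq.1) K hK

lemma orbitDist_of_mem {ℓ : G → ℝ} {τ : G → X → X} (hℓ : IsLength G ℓ) (hτ : IsAction G τ)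
    {K : Set X} {u : X} (hu : u ∈ K) : orbitDist ℓ τ K u = 0 := by
  refine le_antisymm ?_ bot_le
  refine (iInf₂_le (1 : G) ⟨u, hu, hτ.one u⟩).trans ?_
  simp [(hℓ.eq_zero_iff 1).2 rfl]

/-- Points at `dG`-distance zero from `K` are limits in `X` of points of `K`, by the equicontinuity
of the action on `K`; compactness also makes `K` closed. -/
lemma mem_of_orbitDist_eq_zero {ℓ : G → ℝ} {τ : G → X → X} (hequi : TauEquicont ℓ τ)
    {K : Set X} (hK : IsCompact K) {u : X} (hu : orbitDist ℓ τ K u = 0) : u ∈ K := by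
  rw [← hK.isClosed.closure_eq, Metric.mem_closure_iff]
  intro ε hε
  obtain ⟨r, hr, h⟩ := hequi K hK (ε / 2) (by positivity)
  have hlt : orbitDist ℓ τ K u < ENNReal.ofReal r := by rw [hu]; simpa using hr
  obtain ⟨g, ⟨k, hk, rfl⟩, hg⟩ := (orbitDist_lt_iff ..).1 hlt
  refine ⟨k, hk, ?_⟩
  have := h k hk g ((ENNReal.ofReal_lt_ofReal_iff hr).1 hg).le
  rw [dist_comm]
  linarith

lemma orbitDist_action_le {ℓ : G → ℝ} {τ : G → X → X} (hℓ : IsLength G ℓ) (hτ : IsAction G τ)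
    (K : Set X) (g : G) (u : X) :
    orbitDist ℓ τ K (τ g u) ≤ orbitDist ℓ τ K u + ENNReal.ofReal (ℓ g) := by
  conv_rhs => rw [orbitDist]
  rw [ENNReal.iInf_add]
  refine le_iInf fun h => ?_
  rw [ENNReal.iInf_add]
  refine le_iInf fun hu => ?_
  obtain ⟨k, hk, rfl⟩ := hu
  refine (iInf₂_le (g * h) ⟨k, hk, hτ.mul g h k⟩).trans ?_
  rw [← ENNReal.ofReal_add (hℓ.nonneg h) (hℓ.nonneg g), add_comm]
  exact ENNReal.ofReal_le_ofReal (hℓ.mul_le g h)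

lemma action_inv_apply {τ : G → X → X} (hτ : IsAction G τ) (g : G) (u : X) :
    τ g⁻¹ (τ g u) = u := by
  rw [← hτ.mul, inv_mul_cancel, hτ.one]

/-! ### Lipschitz bumps around compact sets -/

lemma orbitBump_nonneg (ℓ : G → ℝ) (τ : G → X → X) (K : Set X) (c : ℝ) (u : X) :
    0 ≤ orbitBump ℓ τ K c u := ENNReal.toReal_nonneg

lemma orbitBump_le_one (ℓ : G → ℝ) (τ : G → X → X) (K : Set X) (c : ℝ) (u : X) :
    orbitBump ℓ τ K c u ≤ 1 :=
  ENNReal.toReal_le_of_le_ofReal zero_le_one (by simp)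

lemma orbitBump_of_mem {ℓ : G → ℝ} {τ : G → X → X} (hℓ : IsLength G ℓ) (hτ : IsAction G τ)
    {K : Set X} (c : ℝ) {u : X} (hu : u ∈ K) : orbitBump ℓ τ K c u = 1 := by
  simp [orbitBump, orbitDist_of_mem hℓ hτ hu]

lemma measurable_orbitBump {ℓ : G → ℝ} {τ : G → X → X} (hmeas : TauMeasImage ℓ τ)
    {K : Set X} (hK : IsCompact K) (c : ℝ) : Measurable (orbitBump ℓ τ K c) :=
  (measurable_const.sub ((measurable_orbitDist hmeas hK).const_mul _)).ennreal_toReal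

lemma orbitBump_sub_le {ℓ : G → ℝ} {τ : G → X → X} (hℓ : IsLength G ℓ) (hτ : IsAction G τ)
    (K : Set X) {c : ℝ} (hc : 0 ≤ c) (g : G) (u : X) :
    orbitBump ℓ τ K c u ≤ orbitBump ℓ τ K c (τ g u) + c * ℓ g := by
  have h1 : 1 - ENNReal.ofReal c * orbitDist ℓ τ K u
      ≤ (1 - ENNReal.ofReal c * orbitDist ℓ τ K (τ g u)) + ENNReal.ofReal (c * ℓ g) := by
    rw [tsub_le_iff_right]
    have h2 : ENNReal.ofReal c * orbitDist ℓ τ K (τ g u)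
        ≤ ENNReal.ofReal c * orbitDist ℓ τ K u + ENNReal.ofReal (c * ℓ g) := by
      rw [ENNReal.ofReal_mul hc, ← mul_add]
      gcongr
      exact orbitDist_action_le hℓ hτ K g u
    calc (1 : ℝ≥0∞) ≤ (1 - ENNReal.ofReal c * orbitDist ℓ τ K (τ g u))
            + ENNReal.ofReal c * orbitDist ℓ τ K (τ g u) := le_tsub_add
      _ ≤ _ := by
        rw [add_assoc, add_comm (ENNReal.ofReal (c * ℓ g))]
        gcongr
  have h3 : (1 - ENNReal.ofReal c * orbitDist ℓ τ K (τ g u)) ≠ ∞ :=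
    ne_top_of_le_ne_top one_ne_top tsub_le_self
  have h4 := ENNReal.toReal_mono (ENNReal.add_ne_top.2 ⟨h3, ofReal_ne_top⟩) h1
  rwa [ENNReal.toReal_add h3 ofReal_ne_top,
    ENNReal.toReal_ofReal (mul_nonneg hc (hℓ.nonneg g))] at h4

lemma abs_orbitBump_sub_le {ℓ : G → ℝ} {τ : G → X → X} (hℓ : IsLength G ℓ) (hτ : IsAction G τ)
    (K : Set X) {c : ℝ} (hc : 0 ≤ c) (g : G) (u : X) :
    |orbitBump ℓ τ K c (τ g u) - orbitBump ℓ τ K c u| ≤ c * ℓ g := by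
  have h1 := orbitBump_sub_le hℓ hτ K hc g u
  have h2 := orbitBump_sub_le hℓ hτ K hc g⁻¹ (τ g u)
  rw [action_inv_apply hτ, hℓ.inv] at h2
  rw [abs_le]
  constructor <;> linarith

/-- It suffices to test `𝓖`-Lipschitz bounds along the action. Positivity of `c` is needed since
`0 * ∞ = 0`. -/
lemma gLipWith_of_action {ℓ : G → ℝ} {τ : G → X → X} {c : ℝ} (hc : 0 < c) {φ : X → ℝ}
    (h : ∀ g u, |φ (τ g u) - φ u| ≤ c * ℓ g) : GLipWith ℓ τ c φ := by
  intro u₁ u₂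
  have hc0 : ENNReal.ofReal c ≠ 0 := by simpa using hc
  rw [dG, ENNReal.mul_iInf_of_ne hc0 ofReal_ne_top]
  refine le_iInf fun g => ?_
  rw [ENNReal.mul_iInf_of_ne hc0 ofReal_ne_top]
  refine le_iInf fun hu => ?_
  subst hu
  rw [← ENNReal.ofReal_mul hc.le]
  exact ENNReal.ofReal_le_ofReal (h g u₂)

lemma orbitBump_tendsto_zero {ℓ : G → ℝ} {τ : G → X → X} (hequi : TauEquicont ℓ τ)
    {K : Set X} (hK : IsCompact K) {u : X} (hu : u ∉ K) :
    Tendsto (fun n : ℕ => orbitBump ℓ τ K n u) atTop (𝓝 0) := by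
  have hD : orbitDist ℓ τ K u ≠ 0 := fun h => hu (mem_of_orbitDist_eq_zero hequi hK h)
  obtain ⟨N, hN⟩ := ENNReal.exists_nat_mul_gt hD one_ne_top
  refine tendsto_const_nhds.congr' ?_
  filter_upwards [eventually_ge_atTop N] with n hn
  have : (1 : ℝ≥0∞) ≤ n * orbitDist ℓ τ K u := by
    refine hN.le.trans ?_
    gcongr
  simp [orbitBump, tsub_eq_zero_of_le this]

/-! ### Separation of mutually singular measures -/

lemma integrable_of_bdd {μ : Measure X} [IsFiniteMeasure μ] {φ : X → ℝ} (h : IsBddBorel φ) :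
    Integrable φ μ := by
  obtain ⟨hm, M, hM⟩ := h
  exact Integrable.of_bound hm.aestronglyMeasurable M (ae_of_all _ hM)

lemma isBddBorel_orbitBump {ℓ : G → ℝ} {τ : G → X → X} (hmeas : TauMeasImage ℓ τ)
    {K : Set X} (hK : IsCompact K) (c : ℝ) : IsBddBorel (orbitBump ℓ τ K c) :=
  ⟨measurable_orbitBump hmeas hK c, 1, fun u => by
    rw [abs_of_nonneg (orbitBump_nonneg ..)]; exact orbitBump_le_one ..⟩

lemma integral_orbitBump_tendsto_zero {ℓ : G → ℝ} {τ : G → X → X} (hequi : TauEquicont ℓ τ)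
    (hmeas : TauMeasImage ℓ τ) {K : Set X} (hK : IsCompact K)
    (μ : Measure X) [IsFiniteMeasure μ] (hμ : μ K = 0) :
    Tendsto (fun n : ℕ => ∫ u, orbitBump ℓ τ K n u ∂μ) atTop (𝓝 0) := by
  have h := tendsto_integral_of_dominated_convergence (μ := μ)
    (F := fun n : ℕ => orbitBump ℓ τ K n) (f := fun _ => 0) (fun _ => 1)
    (fun n => (measurable_orbitBump hmeas hK n).aestronglyMeasurable)
    (integrable_const _)
    (fun n => ae_of_all _ fun u => by
      rw [Real.norm_eq_abs, abs_of_nonneg (orbitBump_nonneg ..)]; exact orbitBump_le_one ..)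
    (by
      filter_upwards [measure_eq_zero_iff_ae_notMem.1 hμ] with u hu
      exact orbitBump_tendsto_zero hequi hK hu)
  simpa using h

lemma measure_real_le_integral_orbitBump {ℓ : G → ℝ} {τ : G → X → X} (hℓ : IsLength G ℓ)
    (hτ : IsAction G τ) (hmeas : TauMeasImage ℓ τ) {K : Set X} (hK : IsCompact K)
    (μ : Measure X) [IsFiniteMeasure μ] (c : ℝ) :
    μ.real K ≤ ∫ u, orbitBump ℓ τ K c u ∂μ := by
  rw [← integral_indicator_one hK.measurableSet]
  refine integral_mono ?_ (integrable_of_bdd (isBddBorel_orbitBump hmeas hK c)) fun u => ?_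
  · exact (integrable_const (1 : ℝ)).indicator hK.measurableSet
  · by_cases hu : u ∈ K
    · simp [hu, orbitBump_of_mem hℓ hτ c hu]
    · simpa [hu] using orbitBump_nonneg ..

lemma exists_compact_real {μ : Measure X} [IsProbabilityMeasure μ] (hμ : μ.InnerRegular)
    {A : Set X} (hA : MeasurableSet A) (hA1 : μ Aᶜ = 0) {ε : ℝ} (hε : 0 < ε) :
    ∃ K ⊆ A, IsCompact K ∧ 1 - ε < μ.real K := by
  obtain ⟨K, hKA, hK, h⟩ := hA.exists_isCompact_lt_add (μ := μ) (measure_ne_top _ _)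
    (ε := ENNReal.ofReal ε) (by simpa using hε)
  refine ⟨K, hKA, hK, ?_⟩
  rw [(prob_compl_eq_zero_iff hA).1 hA1] at h
  have := ENNReal.toReal_strict_mono (ENNReal.add_ne_top.2 ⟨measure_ne_top μ K, ofReal_ne_top⟩) h
  rw [ENNReal.toReal_add (measure_ne_top μ K) ofReal_ne_top, ENNReal.toReal_ofReal hε.le,
    ENNReal.toReal_one] at this
  change 1 - ε < (μ K).toReal
  linarith

/-- Mutually singular Radon measures are separated by `𝓖`-Lipschitz functions: the separating
function is the difference of bumps around compact sets nearly carrying `μ` and `ν`. -/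
lemma exists_separating {ℓ : G → ℝ} {τ : G → X → X} (hℓ : IsLength G ℓ) (hτ : IsAction G τ)
    (hequi : TauEquicont ℓ τ) (hmeas : TauMeasImage ℓ τ)
    (μ ν : Measure X) [IsProbabilityMeasure μ] [IsProbabilityMeasure ν]
    (hμreg : μ.InnerRegular) (hνreg : ν.InnerRegular) (hsing : μ ⟂ₘ ν) {ε : ℝ} (hε : 0 < ε) :
    ∃ (f : X → ℝ) (c : ℝ), Measurable f ∧ (∀ x, |f x| ≤ 1) ∧ 0 < c ∧ GLipWith ℓ τ c f ∧
      1 - ε ≤ ∫ x, f x ∂μ ∧ ∫ x, f x ∂ν ≤ -1 + ε := by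
  obtain ⟨S, hS, hμS, hνS⟩ := hsing
  obtain ⟨K, hKS, hK, hμK⟩ := exists_compact_real hμreg hS.compl (by simpa using hμS) (half_pos hε)
  obtain ⟨L, hLS, hL, hνL⟩ := exists_compact_real hνreg hS hνS (half_pos hε)
  have h1 := (integral_orbitBump_tendsto_zero hequi hmeas hL μ
    (measure_mono_null hLS hμS)).eventually (gt_mem_nhds (half_pos hε))
  have h2 := (integral_orbitBump_tendsto_zero hequi hmeas hK ν
    (measure_mono_null hKS hνS)).eventually (gt_mem_nhds (half_pos hε))
  obtain ⟨n, ⟨h1, h2⟩, hn⟩ := ((h1.and h2).and (eventually_ge_atTop 1)).exists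
  have hn0 : (0 : ℝ) < n := by exact_mod_cast hn
  refine ⟨fun x => orbitBump ℓ τ K n x - orbitBump ℓ τ L n x, 2 * n,
    (measurable_orbitBump hmeas hK n).sub (measurable_orbitBump hmeas hL n), fun x => ?_,
    by positivity, gLipWith_of_action (by positivity) fun g u => ?_, ?_, ?_⟩
  · have a1 := orbitBump_nonneg ℓ τ K n x
    have a2 := orbitBump_nonneg ℓ τ L n x
    have a3 := orbitBump_le_one ℓ τ K n x
    have a4 := orbitBump_le_one ℓ τ L n x
    rw [abs_le]
    constructor <;> linarith
  · have a1 := abs_le.1 (abs_orbitBump_sub_le hℓ hτ K hn0.le g u)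
    have a2 := abs_le.1 (abs_orbitBump_sub_le hℓ hτ L hn0.le g u)
    rw [abs_le]
    constructor <;> linarith [a1.1, a1.2, a2.1, a2.2]
  · rw [integral_sub (integrable_of_bdd (isBddBorel_orbitBump hmeas hK n))
      (integrable_of_bdd (isBddBorel_orbitBump hmeas hL n))]
    linarith [measure_real_le_integral_orbitBump hℓ hτ hmeas hK μ n]
  · rw [integral_sub (integrable_of_bdd (isBddBorel_orbitBump hmeas hK n))
      (integrable_of_bdd (isBddBorel_orbitBump hmeas hL n))]
    linarith [measure_real_le_integral_orbitBump hℓ hτ hmeas hL ν n]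

/-! ### Convergence along the semigroup -/

lemma ae_tendsto_zero_of_integral_le {μ : Measure X} {h : ℕ → X → ℝ}
    (hint : ∀ j, Integrable (h j) μ) (h0 : ∀ j x, 0 ≤ h j x)
    (hle : ∀ j, ∫ x, h j x ∂μ ≤ (1 / 2) ^ j) :
    ∀ᵐ x ∂μ, Tendsto (fun j => h j x) atTop (𝓝 0) := by
  have hm : ∀ j, AEMeasurable (fun x => ENNReal.ofReal (h j x)) μ := fun j =>
    (hint j).aemeasurable.ennreal_ofReal
  have hfin : ∫⁻ x, ∑' j, ENNReal.ofReal (h j x) ∂μ ≠ ∞ := by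
    rw [lintegral_tsum hm]
    have hb : ∀ j, ∫⁻ x, ENNReal.ofReal (h j x) ∂μ ≤ ENNReal.ofReal ((1 / 2) ^ j) := fun j => by
      rw [← ofReal_integral_eq_lintegral_ofReal (hint j) (ae_of_all _ (h0 j))]
      exact ENNReal.ofReal_le_ofReal (hle j)
    refine ne_top_of_le_ne_top ?_ (ENNReal.tsum_le_tsum hb)
    exact summable_geometric_two.tsum_ofReal_ne_top
  filter_upwards [ae_lt_top' (AEMeasurable.tsum hm) hfin] with x hx
  have := (ENNReal.tendsto_toReal zero_ne_top).comp
    (ENNReal.tendsto_atTop_zero_of_tsum_ne_top hx.ne)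
  simpa [Function.comp_def, ENNReal.toReal_ofReal (h0 _ x)] using this

lemma semigroup_one_add {P : ℝ → (X → ℝ) → (X → ℝ)} (hP : IsMarkovSemigroup P) {t : ℝ}
    (ht : 0 ≤ t) {f : X → ℝ} (hf : IsBddBorel f) (s : ℝ) (x : X) :
    P t (fun x => 1 + s * f x) x = 1 + s * P t f x := by
  obtain ⟨hm, M, hM⟩ := hf
  have h1 : IsBddBorel (fun _ : X => (1 : ℝ)) := ⟨measurable_const, 1, by simp⟩
  have h2 : IsBddBorel (fun x => s * f x) := ⟨hm.const_mul s, |s| * M, fun x => by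
    rw [abs_mul]; exact mul_le_mul_of_nonneg_left (hM x) (abs_nonneg s)⟩
  rw [hP.add t ht _ _ h1 h2, hP.smul t ht s f ⟨hm, M, hM⟩, hP.map_one t ht]

/-- Applied with `s = -1` and `s = 1`: the deviations of `P_t f` from `1` and from `-1` are
nonnegative, and their integrals are those of the deviations of `f`. -/
lemma semigroup_deviation {P : ℝ → (X → ℝ) → (X → ℝ)} (hP : IsMarkovSemigroup P) {t : ℝ}
    (ht : 0 ≤ t) {f : X → ℝ} (hf : Measurable f) (hf1 : ∀ x, |f x| ≤ 1)
    {μ : Measure X} [IsProbabilityMeasure μ] (hμ : IsInvariantMeasure P μ) {s : ℝ} (hs : |s| = 1) :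
    (∀ x, 0 ≤ 1 + s * P t f x) ∧ Integrable (fun x => 1 + s * P t f x) μ ∧
      ∫ x, (1 + s * P t f x) ∂μ = 1 + s * ∫ x, f x ∂μ := by
  have hb : IsBddBorel f := ⟨hf, 1, hf1⟩
  have hPb := hP.preserves t ht f hb
  have hsb : ∀ x, |s * f x| ≤ 1 := fun x => by rw [abs_mul, hs, one_mul]; exact hf1 x
  refine ⟨fun x => ?_, ?_, ?_⟩
  · rw [← semigroup_one_add hP ht hb]
    refine hP.pos t ht (fun x => 1 + s * f x)
      ⟨measurable_const.add (hf.const_mul s), 2, fun x => ?_⟩ (fun x => ?_) x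
    · have := abs_le.1 (hsb x)
      rw [abs_le]
      constructor <;> linarith [this.1, this.2]
    · linarith [(abs_le.1 (hsb x)).1]
  · exact (integrable_const 1).add ((integrable_of_bdd hPb).const_mul s)
  · rw [integral_add (integrable_const 1) ((integrable_of_bdd hPb).const_mul s),
      integral_const_mul, hμ t ht f hb]
    simp

/-! ### Invariant sets -/

/-- A set stable under each `τ_g` is `𝓖`-invariant, and so is its complement. -/
lemma iUnion_image_eq_of_stable {τ : G → X → X} (hτ : IsAction G τ) {U : Set X}
    (h : ∀ g, ∀ u ∈ U, τ g u ∈ U) :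
    (⋃ g : G, τ g '' U) = U ∧ (⋃ g : G, τ g '' Uᶜ) = Uᶜ := by
  constructor
  · apply Set.Subset.antisymm
    · refine Set.iUnion_subset fun g => ?_
      rintro _ ⟨u, hu, rfl⟩
      exact h g u hu
    · exact fun u hu => Set.mem_iUnion.2 ⟨1, u, hu, hτ.one u⟩
  · apply Set.Subset.antisymm
    · refine Set.iUnion_subset fun g => ?_
      rintro _ ⟨u, hu, rfl⟩ hgu
      have := h g⁻¹ _ hgu
      rw [action_inv_apply hτ] at this
      exact hu this
    · exact fun u hu => Set.mem_iUnion.2 ⟨1, u, hu, hτ.one u⟩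

/-! ### The support theorem -/

/-- Support theorem I, part (ii): if `P_t` satisfies `(rAC)_X` with `r(u₀) = ∞` for every
`u₀ ∈ X`, then `U₀` can be chosen to be `𝓖`-invariant, i.e. `τ(𝓖 × U₀) = U₀`, with
`μ(U₀) = 1` and `ν(U₀) = 0`; its complement is then also `𝓖`-invariant and `ν(U₀ᶜ) = 1`. -/
theorem support_theorem_I_invariant_set
    (ℓ : G → ℝ) (τ : G → X → X) (hℓ : IsLength G ℓ) (hτ : IsAction G τ)
    (hequi : TauEquicont ℓ τ) (hmeas : TauMeasImage ℓ τ)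
    (P : ℝ → (X → ℝ) → (X → ℝ)) (hP : IsMarkovSemigroup P)
    (t δ : ℕ → ℝ) (ε₀ C : X → G → ℝ) (r : X → ℝ≥0∞)
    (hrac : RAC ℓ τ P t δ ε₀ C r)
    (hr : ∀ u₀ : X, r u₀ = ⊤)
    (μ ν : Measure X) [IsProbabilityMeasure μ] [IsProbabilityMeasure ν]
    (hμreg : μ.InnerRegular) (hνreg : ν.InnerRegular)
    (hμinv : IsInvariantMeasure P μ) (hνinv : IsInvariantMeasure P ν)
    (hsing : μ ⟂ₘ ν) :
    ∃ U₀ : Set X, MeasurableSet U₀ ∧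
      (⋃ g : G, τ g '' U₀) = U₀ ∧
      μ U₀ = 1 ∧ ν U₀ = 0 ∧
      (⋃ g : G, τ g '' U₀ᶜ) = U₀ᶜ ∧ ν U₀ᶜ = 1 := by
  choose f c hfm hf1 hc hlip hfμ hfν using fun j : ℕ =>
    exists_separating hℓ hτ hequi hmeas μ ν hμreg hνreg hsing
      (ε := (1 / 2 : ℝ) ^ j) (by positivity)
  have hn : ∀ j : ℕ, ∃ n, δ n * c j ≤ (1 / 2 : ℝ) ^ j := fun j => by
    have h := hrac.delta_lim.mul_const (c j)
    rw [zero_mul] at h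
    obtain ⟨n, hn⟩ := (h.eventually (gt_mem_nhds (show (0 : ℝ) < (1 / 2) ^ j by positivity))).exists
    exact ⟨n, hn.le⟩
  choose n hn using hn
  set F : ℕ → X → ℝ := fun j => P (t (n j)) (f j) with hF
  have hFm : ∀ j, Measurable (F j) := fun j =>
    (hP.preserves _ (hrac.t_nonneg _) _ ⟨hfm j, 1, hf1 j⟩).1
  have hδc : Tendsto (fun j => δ (n j) * c j) atTop (𝓝 0) :=
    squeeze_zero (fun j => mul_nonneg (hrac.delta_pos _).le (hc j).le) hn
      (tendsto_pow_atTop_nhds_zero_of_lt_one (by norm_num) (by norm_num))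
  have hAμ : ∀ᵐ x ∂μ, Tendsto (fun j => F j x) atTop (𝓝 1) := by
    have hd := fun j => semigroup_deviation hP (hrac.t_nonneg (n j)) (hfm j) (hf1 j) hμinv
      (s := -1) (by simp)
    filter_upwards [ae_tendsto_zero_of_integral_le (fun j => (hd j).2.1) (fun j => (hd j).1)
      (fun j => by rw [(hd j).2.2]; linarith [hfμ j])] with x hx
    have h := hx.const_sub 1
    simpa using h
  have hBν : ∀ᵐ x ∂ν, Tendsto (fun j => F j x) atTop (𝓝 (-1)) := by
    have hd := fun j => semigroup_deviation hP (hrac.t_nonneg (n j)) (hfm j) (hf1 j) hνinv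
      (s := 1) (by simp)
    filter_upwards [ae_tendsto_zero_of_integral_le (fun j => (hd j).2.1) (fun j => (hd j).1)
      (fun j => by rw [(hd j).2.2]; linarith [hfν j])] with x hx
    have h := hx.sub_const 1
    simpa using h
  -- `F j u - F j (τ g u)` would tend to `2`, but its limit is at most `2 * ε₀ u g < 2`.
  have hsep : ∀ u g, Tendsto (fun j => F j u) atTop (𝓝 1) →
      ¬ Tendsto (fun j => F j (τ g u)) atTop (𝓝 (-1)) := by
    intro u g hu hgu
    have hle : ENNReal.ofReal (ℓ g) ≤ r u := by rw [hr u]; exact le_top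
    have hlhs := (hu.sub hgu).abs
    have hrhs : Tendsto (fun j => 2 * ε₀ u g * 1 + C u g * (δ (n j) * c j)) atTop
        (𝓝 (2 * ε₀ u g * 1 + C u g * 0)) := (hδc.const_mul _).const_add _
    have h2 := le_of_tendsto_of_tendsto' hlhs hrhs fun j => by
      have := hrac.estimate u g hle (f j) ⟨hfm j, 1, hf1 j⟩ 1 (hf1 j) (c j) (hc j).le (hlip j) (n j)
      linarith
    have h3 := hrac.eps_lt_one u g hle
    norm_num at h2
    linarith
  set A : Set X := {x | Tendsto (fun j => F j x) atTop (𝓝 1)} with hA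
  have hAm : MeasurableSet A := measurableSet_tendsto (𝓝 1) hFm
  -- `A` is only Borel, and `hmeas` concerns compact sets, so the saturation is taken of compact
  -- subsets of `A` whose `μ`-measures tend to `1`.
  choose K hKA hK hμK using fun j : ℕ =>
    exists_compact_real hμreg hAm hAμ (ε := 1 / ((j : ℝ) + 1)) (by positivity)
  set U : Set X := ⋃ (j : ℕ) (m : ℕ) (g : G) (_ : ℓ g ≤ (m : ℝ)), τ g '' K j with hU
  have hmemU : ∀ x, x ∈ U ↔ ∃ j g, x ∈ τ g '' K j := fun x => by
    simp only [hU, Set.mem_iUnion, exists_prop]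
    constructor
    · rintro ⟨j, m, g, -, hx⟩
      exact ⟨j, g, hx⟩
    · rintro ⟨j, g, hx⟩
      obtain ⟨m, hm⟩ := exists_nat_ge (ℓ g)
      exact ⟨j, m, g, hm, hx⟩
  have hUm : MeasurableSet U := MeasurableSet.iUnion fun j => MeasurableSet.iUnion fun m =>
    hmeas m (Nat.cast_nonneg m) (K j) (hK j)
  have hstable : ∀ g, ∀ u ∈ U, τ g u ∈ U := fun g u hu => by
    obtain ⟨j, h, k, hk, rfl⟩ := (hmemU u).1 hu
    exact (hmemU _).2 ⟨j, g * h, k, hk, hτ.mul g h k⟩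
  have hμU : μ U = 1 := by
    have hge : 1 ≤ μ.real U := by
      refine le_of_tendsto_of_tendsto' (f := fun j : ℕ => 1 - 1 / ((j : ℝ) + 1)) (b := atTop) ?_
        (tendsto_const_nhds (x := μ.real U)) fun j => ?_
      · simpa using (tendsto_one_div_add_atTop_nhds_zero_nat (𝕜 := ℝ)).const_sub 1
      · refine (hμK j).le.trans (measureReal_mono fun x hx => ?_)
        exact (hmemU x).2 ⟨j, 1, x, hx, hτ.one x⟩
    have h1 : μ.real U = 1 := le_antisymm measureReal_le_one hge
    rw [← ENNReal.toReal_eq_one_iff]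
    exact h1
  have hνU : ν U = 0 := by
    refine measure_mono_null (fun x hx => ?_) hBν
    obtain ⟨j, g, k, hk, rfl⟩ := (hmemU x).1 hx
    exact hsep k g (hKA j hk)
  obtain ⟨h1, h2⟩ := iUnion_image_eq_of_stable hτ hstable
  exact ⟨U, hUm, h1, hμU, hνU, h2, (prob_compl_eq_one_iff hUm).2 hνU⟩

end
end

section
/- Let X/𝓖 be the set of orbits of the action τ, π : X → X/𝓖 the canonical projection, and π_#𝓑 the projected σ-algebra on X/𝓖, i.e. E ∈ π_#𝓑 if and only if π⁻¹(E) ∈ 𝓑(X). Suppose the Markov semigroup P_t satisfies (rAC)_X with r(u₀) = ∞ for every u₀ ∈ X. Then for any two Radon probability measures μ, ν on X which are invariant for P_t, one has μ ⊥ ν if and only if π_#μ ⊥ π_#ν (where π_#μ denotes the pushforward of μ along π). -/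
/-!
The easy direction is that `π` is measurable, so separating sets pull back. For the converse, let
`μ ⊥ ν`. Inner regularity gives disjoint compact sets `K`, `L` carrying almost all of `μ` and of
`ν`. By equicontinuity of the action `K` and `L` are at positive `d_𝓖`-distance, so truncating the
`d_𝓖`-distance to `K` gives a bounded `𝓖`-Lipschitz function `φ` which is `1` on `K` and `-1` on
`L` (`exists_glip_separating`); it is Borel because the sets `τ(B_r × K)` are.

With masses improving geometrically in `k`, choose such `φ_k` and then a time `t_{n_k}` so late that
`δ_{n_k}` beats the Lipschitz constant of `φ_k` (`exists_almost_separating`). By invariance of the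
measures, `ψ_k = P_{t_{n_k}} φ_k` tends to `1` in a summable way in `L¹(μ)` and to `-1` in a summable
way in `L¹(ν)`, hence almost everywhere. If `ψ_k(u) → 1` and `ψ_k(τ_g u) → -1`, then passing to the
limit in `(rAC)_X` gives `2 ≤ 2 ε₀(u,g) < 2`. So no orbit meets both convergence sets. Finally, a
σ-compact subset of full `μ`-measure of the first one has a Borel saturation, which separates
`π_#μ` from `π_#ν`.
-/

open MeasureTheory ENNReal Filter Topology

section

variable {X : Type*} [MetricSpace X] [MeasurableSpace X] [BorelSpace X]
variable {G : Type*} [Group G]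

/-- The `d_𝓖`-distance from `u` to the set `K`, with value `∞` if the orbit of `u` misses `K`. -/
noncomputable def distGSet (ℓ : G → ℝ) (τ : G → X → X) (K : Set X) (u : X) : ℝ≥0∞ :=
  ⨅ (g : G) (_ : τ g u ∈ K), ENNReal.ofReal (ℓ g)

lemma IsAction.inv_cancel {τ : G → X → X} (hτ : IsAction G τ) (g : G) (x : X) :
    τ g⁻¹ (τ g x) = x := by
  rw [← hτ.mul, inv_mul_cancel, hτ.one]

lemma distGSet_le_add {ℓ : G → ℝ} {τ : G → X → X} (hℓ : IsLength G ℓ) (hτ : IsAction G τ)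
    (K : Set X) (g : G) (v : X) :
    distGSet ℓ τ K (τ g v) ≤ distGSet ℓ τ K v + ENNReal.ofReal (ℓ g) := by
  unfold distGSet
  simp only [ENNReal.iInf_add]
  refine le_iInf₂ fun h hh => ?_
  refine (iInf₂_le (h * g⁻¹) ?_).trans ?_
  · rw [hτ.mul, hτ.inv_cancel]; exact hh
  · rw [← ENNReal.ofReal_add (hℓ.nonneg _) (hℓ.nonneg _)]
    refine ENNReal.ofReal_le_ofReal ((hℓ.mul_le _ _).trans ?_)
    rw [hℓ.inv]

/-- The sublevel sets are countable unions of the sets `τ(B_q × K)` with `q` rational. -/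
lemma measurable_distGSet {ℓ : G → ℝ} {τ : G → X → X} (hℓ : IsLength G ℓ) (hτ : IsAction G τ)
    (hmeas : TauMeasImage ℓ τ) {K : Set X} (hK : IsCompact K) :
    Measurable (distGSet ℓ τ K) := by
  refine measurable_of_Iio fun a => ?_
  have : distGSet ℓ τ K ⁻¹' Set.Iio a =
      ⋃ (q : ℚ) (_ : 0 ≤ q ∧ ENNReal.ofReal (q : ℝ) < a),
        ⋃ (g : G) (_ : ℓ g ≤ (q : ℝ)), τ g '' K := by
    ext u
    simp only [Set.mem_preimage, Set.mem_Iio, Set.mem_iUnion, distGSet, iInf_lt_iff, exists_prop,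
      Set.mem_image]
    constructor
    · rintro ⟨g, hg, hga⟩
      obtain ⟨q, hq0, hq1, hq2⟩ := ENNReal.lt_iff_exists_rat_btwn.1 hga
      refine ⟨q, ⟨hq0, hq2⟩, g⁻¹, ?_, τ g u, hg, hτ.inv_cancel _ _⟩
      rw [hℓ.inv]
      exact ((ENNReal.ofReal_lt_ofReal_iff_of_nonneg (hℓ.nonneg _)).1 hq1).le
    · rintro ⟨q, ⟨hq0, hq2⟩, g, hg, x, hx, rfl⟩
      refine ⟨g⁻¹, by rwa [hτ.inv_cancel], lt_of_le_of_lt ?_ hq2⟩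
      rw [hℓ.inv]
      exact ENNReal.ofReal_le_ofReal hg
  rw [this]
  refine MeasurableSet.iUnion fun q => MeasurableSet.iUnion fun hq => ?_
  exact hmeas q (by exact_mod_cast hq.1) K hK

/-- Urysohn-type lemma: disjoint compact sets are separated by a Borel `𝓖`-Lipschitz function. -/
lemma exists_glip_separating {ℓ : G → ℝ} {τ : G → X → X} (hℓ : IsLength G ℓ) (hτ : IsAction G τ)
    (hequi : TauEquicont ℓ τ) (hmeas : TauMeasImage ℓ τ) {K L : Set X} (hK : IsCompact K)
    (hL : IsCompact L) (hKL : Disjoint K L) :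
    ∃ (φ : X → ℝ) (c : ℝ), 0 ≤ c ∧ Measurable φ ∧ (∀ x, |φ x| ≤ 1) ∧ GLipWith ℓ τ c φ ∧
      (∀ x ∈ K, φ x = 1) ∧ ∀ x ∈ L, φ x = -1 := by
  obtain ⟨ε, hε, hdist⟩ : ∃ ε : ℝ, 0 < ε ∧ ∀ x ∈ L, ∀ y ∈ K, ε < dist x y := by
    obtain ⟨ε, hε, h⟩ := Metric.exists_pos_forall_lt_edist hL hK.isClosed hKL.symm
    refine ⟨ε, hε, fun x hx y hy => ?_⟩
    have := h x hx y hy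
    rw [edist_nndist] at this
    exact_mod_cast this
  obtain ⟨r, hr, hgr⟩ := hequi L hL ε hε
  have hfin : ∀ x, min (distGSet ℓ τ K x) (ENNReal.ofReal r) ≠ ⊤ := fun x =>
    ne_top_of_le_ne_top ENNReal.ofReal_ne_top (min_le_right _ _)
  set ψ : X → ℝ := fun x => (min (distGSet ℓ τ K x) (ENNReal.ofReal r)).toReal with hψ
  have hψ0 : ∀ x, 0 ≤ ψ x := fun x => ENNReal.toReal_nonneg
  have hψr : ∀ x, ψ x ≤ r := fun x => by
    have := ENNReal.toReal_mono ENNReal.ofReal_ne_top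
      (min_le_right (distGSet ℓ τ K x) (ENNReal.ofReal r))
    rwa [ENNReal.toReal_ofReal hr.le] at this
  have hψadd : ∀ g v, ψ (τ g v) ≤ ψ v + ℓ g := fun g v => by
    have h1 : min (distGSet ℓ τ K (τ g v)) (ENNReal.ofReal r) ≤
        min (distGSet ℓ τ K v) (ENNReal.ofReal r) + ENNReal.ofReal (ℓ g) := by
      rw [min_add]
      exact min_le_min (distGSet_le_add hℓ hτ K g v) le_self_add
    have h2 := ENNReal.toReal_mono (ENNReal.add_ne_top.2 ⟨hfin v, ENNReal.ofReal_ne_top⟩) h1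
    rwa [ENNReal.toReal_add (hfin v) ENNReal.ofReal_ne_top,
      ENNReal.toReal_ofReal (hℓ.nonneg g)] at h2
  refine ⟨fun x => 1 - 2 / r * ψ x, 2 / r, by positivity, ?_, fun x => ?_, fun u v => ?_,
    fun x hx => ?_, fun x hx => ?_⟩
  · have : Measurable ψ := ((measurable_distGSet hℓ hτ hmeas hK).min measurable_const).ennreal_toReal
    fun_prop
  · have h1 : 0 ≤ 2 / r * ψ x := mul_nonneg (by positivity) (hψ0 x)
    have h2 : 2 / r * ψ x ≤ 2 := by
      rw [div_mul_eq_mul_div, div_le_iff₀ hr]; linarith [hψr x]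
    rw [abs_le]; constructor <;> linarith
  · have hc0 : ENNReal.ofReal (2 / r) ≠ 0 := (ENNReal.ofReal_pos.2 (by positivity)).ne'
    unfold dG
    simp only [ENNReal.mul_iInf_of_ne hc0 ENNReal.ofReal_ne_top]
    refine le_iInf₂ fun g hg => ?_
    rw [← ENNReal.ofReal_mul (by positivity)]
    refine ENNReal.ofReal_le_ofReal ?_
    have h1 := hψadd g v
    have h2 := hψadd g⁻¹ (τ g v)
    rw [hτ.inv_cancel, hℓ.inv] at h2
    have h3 : (1 - 2 / r * ψ u) - (1 - 2 / r * ψ v) = 2 / r * (ψ v - ψ u) := by ring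
    rw [h3, abs_mul, abs_of_pos (by positivity : 0 < 2 / r)]
    refine mul_le_mul_of_nonneg_left ?_ (by positivity)
    rw [hg, abs_le]; constructor <;> linarith
  · have : distGSet ℓ τ K x = 0 := by
      refine le_antisymm ((iInf₂_le 1 ?_).trans ?_) zero_le
      · rwa [hτ.one]
      · rw [(hℓ.eq_zero_iff 1).2 rfl, ENNReal.ofReal_zero]
    simp [hψ, this]
  · have : ENNReal.ofReal r ≤ distGSet ℓ τ K x := by
      refine le_iInf₂ fun g hg => ENNReal.ofReal_le_ofReal ?_
      by_contra! hlt
      exact absurd (hgr x hx g hlt.le) (not_le.2 (hdist x hx _ hg))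
    simp only [hψ, min_eq_right this, ENNReal.toReal_ofReal hr.le]
    field_simp
    norm_num

lemma IsMarkovSemigroup.map_neg {P : ℝ → (X → ℝ) → (X → ℝ)} (hP : IsMarkovSemigroup P)
    {t : ℝ} (ht : 0 ≤ t) {φ : X → ℝ} (hφ : IsBddBorel φ) :
    P t (fun x => -φ x) = fun x => -P t φ x := by
  simpa using hP.smul t ht (-1) φ hφ

lemma IsMarkovSemigroup.le_one {P : ℝ → (X → ℝ) → (X → ℝ)} (hP : IsMarkovSemigroup P)
    {t : ℝ} (ht : 0 ≤ t) {φ : X → ℝ} (hφ : Measurable φ) (hφ1 : ∀ x, |φ x| ≤ 1) (x : X) :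
    P t φ x ≤ 1 := by
  have hb : IsBddBorel φ := ⟨hφ, 1, hφ1⟩
  have hn : IsBddBorel (fun x => -φ x) := ⟨hφ.neg, 1, by simpa using hφ1⟩
  have h1 : IsBddBorel (fun _ : X => (1 : ℝ)) := ⟨measurable_const, 1, by simp⟩
  have hadd := hP.add t ht _ _ h1 hn
  have hpos := hP.pos t ht (fun x => 1 + -φ x)
    ⟨measurable_const.add hφ.neg, 2, fun x => by
      have := abs_le.1 (hφ1 x); rw [abs_le]; constructor <;> linarith⟩
    (fun x => by linarith [(abs_le.1 (hφ1 x)).2]) x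
  rw [hadd, hP.map_one t ht, hP.map_neg ht hb] at hpos
  linarith

lemma IsBddBorel.integrable {φ : X → ℝ} (hφ : IsBddBorel φ) (μ : Measure X) [IsFiniteMeasure μ] :
    Integrable φ μ := by
  obtain ⟨hm, M, hM⟩ := hφ
  exact Integrable.of_bound hm.aestronglyMeasurable M (ae_of_all _ hM)

/-- By invariance `∫ (1 - P_t φ) dμ = ∫ (1 - φ) dμ`, and `1 - φ ≤ 2` vanishes on `K`. -/
lemma lintegral_one_sub_le {P : ℝ → (X → ℝ) → (X → ℝ)} (hP : IsMarkovSemigroup P)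
    {μ : Measure X} [IsProbabilityMeasure μ] (hμ : IsInvariantMeasure P μ)
    {t : ℝ} (ht : 0 ≤ t) {φ : X → ℝ} (hφ : Measurable φ) (hφ1 : ∀ x, |φ x| ≤ 1)
    {K : Set X} (hK : MeasurableSet K) (hφK : ∀ x ∈ K, φ x = 1) :
    ∫⁻ x, ENNReal.ofReal (1 - P t φ x) ∂μ ≤ 2 * μ Kᶜ := by
  have hb : IsBddBorel φ := ⟨hφ, 1, hφ1⟩
  have hi := hb.integrable μ
  have hPi := (hP.preserves t ht φ hb).integrable μ
  calc ∫⁻ x, ENNReal.ofReal (1 - P t φ x) ∂μ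
      = ENNReal.ofReal (∫ x, (1 - P t φ x) ∂μ) :=
        (ofReal_integral_eq_lintegral_ofReal ((integrable_const _).sub hPi)
          (ae_of_all _ fun x => sub_nonneg.2 (hP.le_one ht hφ hφ1 x))).symm
    _ = ENNReal.ofReal (∫ x, (1 - φ x) ∂μ) := by
        rw [integral_sub (integrable_const _) hPi, integral_sub (integrable_const _) hi,
          hμ t ht φ hb]
    _ = ∫⁻ x, ENNReal.ofReal (1 - φ x) ∂μ :=
        ofReal_integral_eq_lintegral_ofReal ((integrable_const _).sub hi)
          (ae_of_all _ fun x => sub_nonneg.2 (abs_le.1 (hφ1 x)).2)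
    _ ≤ ∫⁻ x, Kᶜ.indicator (fun _ => (2 : ℝ≥0∞)) x ∂μ := by
        refine lintegral_mono fun x => ?_
        by_cases hx : x ∈ K
        · simp [hφK x hx]
        · rw [Set.indicator_of_mem (by exact hx)]
          refine (ENNReal.ofReal_le_ofReal (?_ : _ ≤ (2 : ℝ))).trans (by simp)
          linarith [(abs_le.1 (hφ1 x)).1]
    _ = 2 * μ Kᶜ := lintegral_indicator_const hK.compl 2

lemma exists_compact_compl_lt {μ : Measure X} [IsProbabilityMeasure μ] (hreg : μ.InnerRegular)
    {A : Set X} (hA : MeasurableSet A) (hA0 : μ Aᶜ = 0) {ε : ℝ≥0∞} (hε : ε ≠ 0) :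
    ∃ K ⊆ A, IsCompact K ∧ μ Kᶜ < ε := by
  obtain ⟨K, hKA, hK, hlt⟩ := hA.exists_isCompact_sdiff_lt (measure_ne_top μ A) hε
  refine ⟨K, hKA, hK, lt_of_le_of_lt ?_ hlt⟩
  calc μ Kᶜ ≤ μ (A \ K ∪ Aᶜ) := measure_mono fun x hx => by
        by_cases h : x ∈ A
        · exact Or.inl ⟨h, hx⟩
        · exact Or.inr h
    _ ≤ μ (A \ K) + μ Aᶜ := measure_union_le _ _
    _ = μ (A \ K) := by rw [hA0, add_zero]

/-- For mutually singular invariant measures, some `ψ = P_{t_n} φ` is `L¹(μ)`-close to `1` and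
`L¹(ν)`-close to `-1`, while its variation along orbits is controlled by `ε₀` up to a small
multiple of `C`. -/
lemma exists_almost_separating {ℓ : G → ℝ} {τ : G → X → X} (hℓ : IsLength G ℓ)
    (hτ : IsAction G τ) (hequi : TauEquicont ℓ τ) (hmeas : TauMeasImage ℓ τ)
    {P : ℝ → (X → ℝ) → (X → ℝ)} (hP : IsMarkovSemigroup P)
    {t δ : ℕ → ℝ} {ε₀ C : X → G → ℝ} {r : X → ℝ≥0∞} (hrac : RAC ℓ τ P t δ ε₀ C r)
    (hr : ∀ u₀ : X, r u₀ = ⊤)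
    {μ ν : Measure X} [IsProbabilityMeasure μ] [IsProbabilityMeasure ν]
    (hμreg : μ.InnerRegular) (hνreg : ν.InnerRegular)
    (hμinv : IsInvariantMeasure P μ) (hνinv : IsInvariantMeasure P ν) (hsing : μ ⟂ₘ ν)
    {ε : ℝ} (hε : 0 < ε) :
    ∃ (ψ : X → ℝ) (η : ℝ), Measurable ψ ∧ 0 ≤ η ∧ η ≤ ε ∧
      ∫⁻ x, ENNReal.ofReal (1 - ψ x) ∂μ ≤ ENNReal.ofReal ε ∧
      ∫⁻ x, ENNReal.ofReal (1 + ψ x) ∂ν ≤ ENNReal.ofReal ε ∧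
      ∀ u g, |ψ u - ψ (τ g u)| ≤ 2 * ε₀ u g + η * C u g := by
  obtain ⟨S, hS, hμS, hνS⟩ := hsing
  have hε2 : ENNReal.ofReal (ε / 2) ≠ 0 := (ENNReal.ofReal_pos.2 (by positivity)).ne'
  obtain ⟨K, hKS, hK, hμK⟩ := exists_compact_compl_lt hμreg hS.compl (by rwa [compl_compl]) hε2
  obtain ⟨L, hLS, hL, hνL⟩ := exists_compact_compl_lt hνreg hS hνS hε2
  obtain ⟨φ, c, hc, hφ, hφ1, hlip, hφK, hφL⟩ := exists_glip_separating hℓ hτ hequi hmeas hK hL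
    ((disjoint_compl_left).mono hKS hLS)
  have hlim : Tendsto (fun n => δ n * c) atTop (𝓝 0) := by
    simpa using hrac.delta_lim.mul_const c
  obtain ⟨n, hn⟩ := (hlim.eventually (ge_mem_nhds hε)).exists
  have hb : IsBddBorel φ := ⟨hφ, 1, hφ1⟩
  have ht := hrac.t_nonneg n
  have h2 : ∀ a : ℝ≥0∞, a < ENNReal.ofReal (ε / 2) → 2 * a ≤ ENNReal.ofReal ε := fun a ha => by
    calc 2 * a ≤ 2 * ENNReal.ofReal (ε / 2) := by gcongr
      _ = ENNReal.ofReal ε := by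
        rw [← ENNReal.ofReal_ofNat, ← ENNReal.ofReal_mul (by norm_num)]; congr 1; ring
  refine ⟨P (t n) φ, δ n * c, (hP.preserves _ ht φ hb).1,
    mul_nonneg (hrac.delta_pos n).le hc, hn, ?_, ?_, fun u g => ?_⟩
  · exact (lintegral_one_sub_le hP hμinv ht hφ hφ1 hK.measurableSet hφK).trans (h2 _ hμK)
  · have := lintegral_one_sub_le hP hνinv ht hφ.neg (by simpa using hφ1) hL.measurableSet
      (fun x hx => by simp [hφL x hx])
    rw [show (-φ) = fun x => -φ x from rfl, hP.map_neg ht hb] at this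
    simp only [sub_neg_eq_add] at this
    exact this.trans (h2 _ hνL)
  · have := hrac.estimate u g (by simp [hr]) φ hb 1 hφ1 c hc hlip n
    linarith

/-- Borel–Cantelli type statement: finiteness of the sum at `x` forces the positive parts of
`f k x` to tend to `0`. -/
lemma ae_tsum_ne_top {μ : Measure X} {f : ℕ → X → ℝ} (hf : ∀ k, Measurable (f k))
    (hle : ∀ k, ∫⁻ x, ENNReal.ofReal (f k x) ∂μ ≤ ENNReal.ofReal ((1 / 2) ^ k)) :
    ∀ᵐ x ∂μ, ∑' k, ENNReal.ofReal (f k x) ≠ ⊤ := by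
  refine (ae_lt_top (Measurable.ennreal_tsum fun k => (hf k).ennreal_ofReal) ?_).mono
    fun x hx => hx.ne
  rw [lintegral_tsum fun k => (hf k).ennreal_ofReal.aemeasurable]
  refine ne_top_of_le_ne_top ?_ (ENNReal.tsum_le_tsum hle)
  rw [← ENNReal.ofReal_tsum_of_nonneg (fun k => by positivity) summable_geometric_two]
  exact ENNReal.ofReal_ne_top


/-- Support theorem II (mutual singularity): let `X/𝓖` be the space of orbits of the action
`τ` (realized as the quotient by the setoid `s` whose relation is `x ≈ y ↔ ∃ g, x = τ_g y`),
`π = Quotient.mk s` the canonical projection, and equip `X/𝓖` with the projected σ-algebra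
(`E` is measurable iff `π⁻¹(E)` is Borel in `X`).  If `P_t` satisfies `(rAC)_X` with
`r(u₀) = ∞` for every `u₀`, then for invariant Radon probability measures `μ, ν`:
`μ ⊥ ν ↔ π_#μ ⊥ π_#ν`. -/
theorem support_theorem_II_mutuallySingular
    (ℓ : G → ℝ) (τ : G → X → X) (hℓ : IsLength G ℓ) (hτ : IsAction G τ)
    (hequi : TauEquicont ℓ τ) (hmeas : TauMeasImage ℓ τ)
    (P : ℝ → (X → ℝ) → (X → ℝ)) (hP : IsMarkovSemigroup P)
    (t δ : ℕ → ℝ) (ε₀ C : X → G → ℝ) (r : X → ℝ≥0∞)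
    (hrac : RAC ℓ τ P t δ ε₀ C r)
    (hr : ∀ u₀ : X, r u₀ = ⊤)
    (s : Setoid X) (hs : ∀ x y : X, s.r x y ↔ ∃ g : G, x = τ g y)
    (μ ν : Measure X) [IsProbabilityMeasure μ] [IsProbabilityMeasure ν]
    (hμreg : μ.InnerRegular) (hνreg : ν.InnerRegular)
    (hμinv : IsInvariantMeasure P μ) (hνinv : IsInvariantMeasure P ν) :
    μ ⟂ₘ ν ↔ μ.map (Quotient.mk s) ⟂ₘ ν.map (Quotient.mk s) := by
  have hπ : Measurable (Quotient.mk s) := measurable_quotient_mk''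
  constructor
  swap
  · rintro ⟨E, hE, h1, h2⟩
    refine ⟨Quotient.mk s ⁻¹' E, hπ hE, ?_, ?_⟩
    · rwa [Measure.map_apply hπ hE] at h1
    · rwa [Measure.map_apply hπ hE.compl] at h2
  intro hsing
  have hex := fun k : ℕ => exists_almost_separating hℓ hτ hequi hmeas hP hrac hr hμreg hνreg
    hμinv hνinv hsing (ε := (1 / 2) ^ k) (by positivity)
  choose ψ η hψ hη0 hηle hψμ hψν hψC using hex
  have hη : Tendsto η atTop (𝓝 0) :=
    squeeze_zero hη0 hηle (tendsto_pow_atTop_nhds_zero_of_lt_one (by norm_num) (by norm_num))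
  set A : Set X := {x | ∑' k, ENNReal.ofReal (1 - ψ k x) ≠ ⊤} with hA
  set B : Set X := {x | ∑' k, ENNReal.ofReal (1 + ψ k x) ≠ ⊤} with hB
  have hAm : MeasurableSet A :=
    (Measurable.ennreal_tsum fun k => ((hψ k).const_sub 1).ennreal_ofReal)
      (measurableSet_singleton ⊤).compl
  have hμA : μ Aᶜ = 0 := ae_tsum_ne_top (fun k => (hψ k).const_sub 1) hψμ
  have hνB : ν Bᶜ = 0 := ae_tsum_ne_top (fun k => (hψ k).const_add 1) hψν
  -- No orbit meets both `A` and `B`.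
  have hAB : ∀ u ∈ A, ∀ g, τ g u ∉ B := by
    intro u hu g hg
    have h1 := ENNReal.tendsto_atTop_zero_of_tsum_ne_top hu
    have h2 := ENNReal.tendsto_atTop_zero_of_tsum_ne_top hg
    have h1' := (ENNReal.tendsto_toReal ENNReal.zero_ne_top).comp h1
    have h2' := (ENNReal.tendsto_toReal ENNReal.zero_ne_top).comp h2
    have h3 : Tendsto (fun k => η k * C u g) atTop (𝓝 0) := by simpa using hη.mul_const (C u g)
    have h4 : ∀ k, 2 ≤ 2 * ε₀ u g + η k * C u g +
        ((ENNReal.ofReal (1 - ψ k u)).toReal + (ENNReal.ofReal (1 + ψ k (τ g u))).toReal) := by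
      intro k
      simp only [ENNReal.toReal_ofReal']
      have := (le_abs_self _).trans (hψC k u g)
      have := le_max_left (1 - ψ k u) 0
      have := le_max_left (1 + ψ k (τ g u)) 0
      linarith
    have h5 := ge_of_tendsto' ((h3.const_add (2 * ε₀ u g)).add (h1'.add h2')) h4
    have := hrac.eps_lt_one u g (by simp [hr])
    simp at h5
    linarith
  have hcpt : ∀ n : ℕ, ∃ K ⊆ A, IsCompact K ∧ μ Kᶜ < ENNReal.ofReal ((1 / 2) ^ n) := fun n =>
    exists_compact_compl_lt hμreg hAm hμA (ENNReal.ofReal_pos.2 (by positivity)).ne'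
  choose K hKA hK hμK using hcpt
  -- The saturation of `⋃ n, K n`, written as a countable union of Borel sets.
  set D : Set X := ⋃ (n : ℕ) (m : ℕ), ⋃ (g : G) (_ : ℓ g ≤ (m : ℝ)), τ g '' K n with hD
  have hDm : MeasurableSet D :=
    MeasurableSet.iUnion fun n => MeasurableSet.iUnion fun m => hmeas m m.cast_nonneg _ (hK n)
  have hDmem : ∀ x, x ∈ D ↔ ∃ n g, ∃ y ∈ K n, τ g y = x := by
    intro x
    simp only [hD, Set.mem_iUnion, Set.mem_image, exists_prop]
    constructor
    · rintro ⟨n, m, g, -, y, hy, rfl⟩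
      exact ⟨n, g, y, hy, rfl⟩
    · rintro ⟨n, g, y, hy, rfl⟩
      obtain ⟨m, hm⟩ := exists_nat_ge (ℓ g)
      exact ⟨n, m, g, hm, y, hy, rfl⟩
  have hμD : μ Dᶜ = 0 := by
    have hlim : Tendsto (fun n : ℕ => ENNReal.ofReal ((1 / 2) ^ n)) atTop (𝓝 0) := by
      simpa using ENNReal.tendsto_ofReal
        (tendsto_pow_atTop_nhds_zero_of_lt_one (r := (1 / 2 : ℝ)) (by norm_num) (by norm_num))
    refine le_antisymm (ge_of_tendsto' hlim fun n => le_trans (measure_mono ?_) (hμK n).le) zero_le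
    refine Set.compl_subset_compl.2 fun x hx => (hDmem x).2 ⟨n, 1, x, hx, hτ.one x⟩
  have hνD : ν D = 0 := by
    refine measure_mono_null (fun x hx => ?_) hνB
    obtain ⟨n, g, y, hy, rfl⟩ := (hDmem x).1 hx
    exact hAB y (hKA n hy) g
  have hpre : Quotient.mk s ⁻¹' (Quotient.mk s '' D) = D := by
    refine Set.Subset.antisymm ?_ (Set.subset_preimage_image _ _)
    rintro x ⟨y, hy, hxy⟩
    obtain ⟨n, g, z, hz, rfl⟩ := (hDmem y).1 hy
    obtain ⟨h, hh⟩ := (hs _ _).1 (Quotient.exact hxy)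
    refine (hDmem x).2 ⟨n, h⁻¹ * g, z, hz, ?_⟩
    rw [hτ.mul, hh, hτ.inv_cancel]
  have hEm : MeasurableSet (Quotient.mk s '' D) := by
    refine measurableSet_quotient.2 ?_
    change MeasurableSet (Quotient.mk s ⁻¹' (Quotient.mk s '' D))
    rwa [hpre]
  refine ⟨(Quotient.mk s '' D)ᶜ, hEm.compl, ?_, ?_⟩
  · rwa [Measure.map_apply hπ hEm.compl, Set.preimage_compl, hpre]
  · rwa [compl_compl, Measure.map_apply hπ hEm, hpre]

end
end

section
/- Let f₁, f₂ ≥ 0 be random variables on a probability space with E[f₁] < ∞ and E[f₂] < ∞, and let η > 0. Then E[|f₁ − f₂|] ≤ E[f₁] + E[f₂] − η ( P({f₁ ≥ η}) + P({f₂ ≥ η}) − 1 ). -/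
/-!
The bound is the expectation of the pointwise inequality
`|f₁ - f₂| ≤ f₁ + f₂ - η (1_{f₁ ≥ η} + 1_{f₂ ≥ η} - 1)`, which holds because
`|f₁ - f₂| = f₁ + f₂ - 2 min f₁ f₂`.
-/

open MeasureTheory

/-- Lemma 2.12: for nonnegative integrable random variables `f₁, f₂` on a probability space
and `η > 0`,
`E|f₁ − f₂| ≤ E f₁ + E f₂ − η (P({f₁ ≥ η}) + P({f₂ ≥ η}) − 1)`. -/
theorem abs_sub_expectation_bound
    {Ω : Type*} [MeasurableSpace Ω] (P : Measure Ω) [IsProbabilityMeasure P]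
    (f₁ f₂ : Ω → ℝ) (hm₁ : Measurable f₁) (hm₂ : Measurable f₂)
    (hpos₁ : ∀ ω, 0 ≤ f₁ ω) (hpos₂ : ∀ ω, 0 ≤ f₂ ω)
    (hint₁ : Integrable f₁ P) (hint₂ : Integrable f₂ P)
    (η : ℝ) (hη : 0 < η) :
    ∫ ω, |f₁ ω - f₂ ω| ∂P ≤
      ∫ ω, f₁ ω ∂P + ∫ ω, f₂ ω ∂P -
        η * ((P {ω | η ≤ f₁ ω}).toReal + (P {ω | η ≤ f₂ ω}).toReal - 1) := by
  have hA : MeasurableSet {ω | η ≤ f₁ ω} := measurableSet_le measurable_const hm₁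
  have hB : MeasurableSet {ω | η ≤ f₂ ω} := measurableSet_le measurable_const hm₂
  have hiA : Integrable ({ω | η ≤ f₁ ω}.indicator (fun _ => (1 : ℝ))) P :=
    (integrable_const 1).indicator hA
  have hiB : Integrable ({ω | η ≤ f₂ ω}.indicator (fun _ => (1 : ℝ))) P :=
    (integrable_const 1).indicator hB
  -- `|a - b| = a + b - 2 min a b`, and `min a b` is at least `η` when both `a, b ≥ η`;
  -- otherwise the factor of `η` is nonpositive and `min a b ≥ 0` suffices.
  have key : ∀ ω, |f₁ ω - f₂ ω| ≤ f₁ ω + f₂ ω -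
      η * ({ω | η ≤ f₁ ω}.indicator (fun _ => (1 : ℝ)) ω +
        {ω | η ≤ f₂ ω}.indicator (fun _ => (1 : ℝ)) ω - 1) := by
    intro ω
    have h1 := hpos₁ ω
    have h2 := hpos₂ ω
    simp only [Set.indicator_apply, Set.mem_ofPred_eq]
    split_ifs <;> rw [abs_le] <;> constructor <;> linarith
  have hsum : Integrable (fun ω => f₁ ω + f₂ ω) P := hint₁.add hint₂
  have hind : Integrable (fun ω => {ω | η ≤ f₁ ω}.indicator (fun _ => (1 : ℝ)) ω +
      {ω | η ≤ f₂ ω}.indicator (fun _ => (1 : ℝ)) ω) P := hiA.add hiB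
  have hint : Integrable (fun ω => η * ({ω | η ≤ f₁ ω}.indicator (fun _ => (1 : ℝ)) ω +
      {ω | η ≤ f₂ ω}.indicator (fun _ => (1 : ℝ)) ω - 1)) P :=
    (hind.sub (integrable_const 1)).const_mul η
  refine (integral_mono (hint₁.sub hint₂).abs (hsum.sub hint) key).trans_eq ?_
  simp only [Pi.sub_apply]
  rw [integral_sub hsum hint, integral_add hint₁ hint₂, integral_const_mul,
    integral_sub hind (integrable_const 1), integral_add hiA hiB,
    integral_indicator_const _ hA, integral_indicator_const _ hB]
  simp [Measure.real]
end

section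
/- Let S̃ ⊆ X be a σ-compact set. Define r₀ : X → [0,∞] by r₀(u) := sup{ r ≥ 0 : u ∉ τ(B_r × S̃) } when u ∉ ⋂_{r>0} τ(B_r × S̃), and r₀(u) := 0 otherwise. Then r₀ is Borel measurable, and r₀ is 𝓖-Lipschitz with constant at most 1, i.e. |r₀(x) − r₀(y)| ≤ d_𝓖(x, y) for all x, y ∈ X. -/
/-!
The radius function equals `⨅ {|g| : u ∈ τ_g(S)}` (`rZero_eq_iInf`): its defining set is an initial
segment of `[0,∞]` whose least upper bound is that infimum. Hence `r₀(u) < a` holds exactly when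
`u ∈ τ(B_q × K_n)` for some rational `0 ≤ q < a` and some piece `K_n` of a compact exhaustion of
`S`, so the sublevel sets are countable unions of Borel sets. The Lipschitz bound is the triangle
inequality: if `x = τ_h(y)` and `y = τ_g(s)` with `s ∈ S`, then `x = τ_{hg}(s)` and
`|hg| ≤ |h| + |g|`.
-/

open MeasureTheory ENNReal Filter Topology

section

variable {X : Type*} [MetricSpace X] [MeasurableSpace X] [BorelSpace X]
variable {G : Type*} [Group G]

/-- The radius function `r₀(u) = sup {r ≥ 0 : u ∉ τ(B_r × S̃)}` (with value `0` when no such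
`r` exists, i.e. on `⋂_{r > 0} τ(B_r × S̃)`, and value `∞` allowed).  Here
`u ∉ τ(B_r × S̃)` is expressed as `∀ g, |g| ≤ r → u ∉ τ_g(S̃)`, and the supremum is taken in
`[0,∞]`, so that `sup ∅ = 0`. -/
noncomputable def rZero (ℓ : G → ℝ) (τ : G → X → X) (S : Set X) (u : X) : ℝ≥0∞ :=
  sSup {r : ℝ≥0∞ | ∀ g : G, ENNReal.ofReal (ℓ g) ≤ r → u ∉ τ g '' S}

theorem rZero_eq_iInf {X G : Type*} (ℓ : G → ℝ) (τ : G → X → X) (S : Set X) (u : X) :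
    rZero ℓ τ S u = ⨅ (g : G) (_ : u ∈ τ g '' S), ENNReal.ofReal (ℓ g) := by
  apply le_antisymm
  · refine sSup_le fun r hr => le_iInf₂ fun g hg => ?_
    by_contra hlt
    exact hr g (not_le.mp hlt).le hg
  · refine le_of_forall_lt fun r hr => ?_
    obtain ⟨r', hrr', hr'⟩ := exists_between hr
    refine hrr'.trans_le (le_sSup fun g hg hu => ?_)
    exact (hr'.trans_le (iInf₂_le g hu)).not_ge hg

theorem rZero_lt_iff {X G : Type*} (ℓ : G → ℝ) (τ : G → X → X) (K : ℕ → Set X) (u : X)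
    (a : ℝ≥0∞) :
    rZero ℓ τ (⋃ n, K n) u < a ↔
      ∃ q : ℚ, (0 ≤ q ∧ ENNReal.ofReal q < a) ∧
        ∃ n, u ∈ ⋃ (g : G) (_ : ℓ g ≤ q), τ g '' K n := by
  simp only [rZero_eq_iInf, iInf_lt_iff, Set.image_iUnion, Set.mem_iUnion, exists_prop]
  constructor
  · rintro ⟨g, ⟨n, hn⟩, hg⟩
    obtain ⟨q, hq0, hgq, hqa⟩ := ENNReal.lt_iff_exists_rat_btwn.mp hg
    exact ⟨q, ⟨hq0, hqa⟩, n, g,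
      (ENNReal.ofReal_le_ofReal_iff (by exact_mod_cast hq0)).mp hgq.le, hn⟩
  · rintro ⟨q, ⟨-, hqa⟩, n, g, hg, hn⟩
    exact ⟨g, ⟨n, hn⟩, (ENNReal.ofReal_le_ofReal hg).trans_lt hqa⟩

/-- From the proof of Theorem 2.9: for a σ-compact set `S̃ ⊆ X`, the function `r₀` is Borel
measurable and `𝓖`-Lipschitz with constant at most `1`, i.e.
`|r₀(x) − r₀(y)| ≤ d_𝓖(x,y)` for all `x, y ∈ X` (stated as a one-sided inequality, which by
symmetry in `x` and `y` is equivalent to the two-sided bound). -/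
theorem rZero_measurable_and_lipschitz
    (ℓ : G → ℝ) (τ : G → X → X) (hℓ : IsLength G ℓ) (hτ : IsAction G τ)
    (hmeas : TauMeasImage ℓ τ)
    (S : Set X) (hS : IsSigmaCompact S) :
    Measurable (rZero ℓ τ S) ∧
      ∀ x y : X, rZero ℓ τ S x ≤ rZero ℓ τ S y + dG ℓ τ x y := by
  constructor
  · obtain ⟨K, hK, rfl⟩ := hS
    refine measurable_of_Iio fun a => ?_
    have hset : rZero ℓ τ (⋃ n, K n) ⁻¹' Set.Iio a =
        ⋃ (q : ℚ) (_ : 0 ≤ q ∧ ENNReal.ofReal q < a) (n : ℕ),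
          ⋃ (g : G) (_ : ℓ g ≤ q), τ g '' K n := by
      ext u
      rw [Set.mem_preimage, Set.mem_Iio, rZero_lt_iff]
      simp only [Set.mem_iUnion, exists_prop]
    rw [hset]
    exact MeasurableSet.iUnion fun q => MeasurableSet.iUnion fun hq =>
      MeasurableSet.iUnion fun n => hmeas q (by exact_mod_cast hq.1) (K n) (hK n)
  · intro x y
    rw [rZero_eq_iInf, rZero_eq_iInf, dG]
    simp only [ENNReal.iInf_add, ENNReal.add_iInf]
    refine le_iInf₂ fun h hx => le_iInf₂ fun g hy => ?_
    obtain ⟨s, hs, rfl⟩ := hy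
    refine (iInf₂_le (h * g) ⟨s, hs, by rw [hτ.mul, hx]⟩).trans ?_
    rw [← ENNReal.ofReal_add (hℓ.nonneg g) (hℓ.nonneg h), add_comm]
    exact ENNReal.ofReal_le_ofReal (hℓ.mul_le h g)

end
end

section
/- Let Z be a metric space, μ a finite nonnegative Borel measure on Z, and X ⊆ Z an arbitrary subset, equipped with the subspace topology and its Borel σ-algebra. Then there exists a unique Radon measure ι*μ on X (i.e. a finite Borel measure on X which is inner regular with respect to compact sets) such that ι*μ(K) = μ(K) for every compact set K ⊆ X. (Note that a compact K ⊆ X is compact in Z, hence closed and Borel in Z, so μ(K) is well defined.) -/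
open MeasureTheory

/-!
Among the compact subsets of `X`, choose a sequence `K n` whose measures tend to the supremum of
the measures of compact subsets of `X`, and let `S = ⋃ n, K n`. The set `S ⊆ X` is Borel in `Z`,
and it contains every compact `K ⊆ X` up to a `μ`-null set, since otherwise some `K n ∪ K` would
have measure above the supremum (`exists_isCompact_seq_exhausting`). The required measure is
`A ↦ μ (A ∩ S)`, obtained as the pullback of `μ.restrict S` along the inclusion of `X`. Although
`X` need not be measurable, it is so modulo `μ.restrict S`, so this pullback is well behaved
(`comap_val_restrict_apply`). It is inner regular because `S` is σ-compact and a finite Borel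
measure on a metric space is inner regular with respect to closed sets. Uniqueness holds because an
inner regular measure is determined by its values on compact sets.
-/

/-- Any set `X` contains a σ-compact set that almost contains every compact subset of `X`. -/
theorem exists_isCompact_seq_exhausting
    {Z : Type*} [MetricSpace Z] [MeasurableSpace Z] [BorelSpace Z]
    (μ : Measure Z) [IsFiniteMeasure μ] (X : Set Z) :
    ∃ K : ℕ → Set Z, (∀ n, IsCompact (K n)) ∧ (∀ n, K n ⊆ X) ∧
      ∀ C : Set Z, IsCompact C → C ⊆ X → μ (C \ ⋃ n, K n) = 0 := by
  set T : Set ENNReal := {r | ∃ C : Set Z, IsCompact C ∧ C ⊆ X ∧ μ C = r} with hT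
  have hne : T.Nonempty := ⟨μ ∅, ∅, isCompact_empty, Set.empty_subset _, rfl⟩
  obtain ⟨u, -, hu, huT⟩ := exists_seq_tendsto_sSup hne (OrderTop.bddAbove T)
  choose K hK hKX hKu using huT
  refine ⟨K, hK, hKX, fun C hC hCX => ?_⟩
  have hfin : sSup T ≠ ⊤ := by
    refine ne_top_of_le_ne_top (measure_ne_top μ Set.univ) (sSup_le ?_)
    rintro _ ⟨C, -, -, rfl⟩
    exact measure_mono (Set.subset_univ _)
  have hle : ∀ n, u n + μ (C \ ⋃ n, K n) ≤ sSup T := fun n => by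
    have hdisj : Disjoint (K n) (C \ ⋃ n, K n) :=
      Set.disjoint_sdiff_right.mono_left (Set.subset_iUnion K n)
    rw [← hKu n, ← measure_union' hdisj (hK n).measurableSet]
    exact (measure_mono (Set.union_subset_union_right _ Set.sdiff_subset)).trans
      (le_sSup ⟨K n ∪ C, (hK n).union hC, Set.union_subset (hKX n) hCX, rfl⟩)
  have hlim := le_of_tendsto' (hu.add_const (μ (C \ ⋃ n, K n))) hle
  exact nonpos_iff_eq_zero.1 ((ENNReal.add_le_add_iff_left hfin).1 (by simpa using hlim))

/-- If `S ⊆ X` is measurable, every measurable subset of `X` is null-measurable for `μ.restrict S`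
as a subset of `Z`, so the pullback of `μ.restrict S` to `X` is computed by taking images. -/
theorem comap_val_restrict_apply {Z : Type*} [MeasurableSpace Z] (μ : Measure Z) {X S : Set Z}
    (hS : MeasurableSet S) (hSX : S ⊆ X) {A : Set X} (hA : MeasurableSet A) :
    (μ.restrict S).comap (Subtype.val : X → Z) A = μ (Subtype.val '' A ∩ S) := by
  have hnull : ∀ A : Set X, MeasurableSet A →
      NullMeasurableSet (Subtype.val '' A : Set Z) (μ.restrict S) := by
    rintro _ ⟨B, hB, rfl⟩
    have hX : X =ᵐ[μ.restrict S] Set.univ :=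
      Filter.eventuallyEq_univ.2 (Filter.mem_of_superset (ae_restrict_mem hS) hSX)
    rw [Subtype.image_preimage_coe]
    exact (MeasurableSet.univ.nullMeasurableSet.congr hX.symm).inter hB.nullMeasurableSet
  rw [Measure.comap_apply₀ _ _ Subtype.val_injective hnull hA.nullMeasurableSet,
    Measure.restrict_apply' hS]

theorem exists_unique_radon_restriction
    {Z : Type*} [MetricSpace Z] [MeasurableSpace Z] [BorelSpace Z]
    (μ : Measure Z) [IsFiniteMeasure μ] (X : Set Z) :
    ∃! m : Measure X,
      IsFiniteMeasure m ∧ m.InnerRegular ∧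
      ∀ K : Set X, IsCompact K → m K = μ (Subtype.val '' K) := by
  obtain ⟨K, hK, hKX, hnull⟩ := exists_isCompact_seq_exhausting μ X
  set S := ⋃ n, K n with hSdef
  have hS : MeasurableSet S := MeasurableSet.iUnion fun n => (hK n).measurableSet
  have hSX : S ⊆ X := Set.iUnion_subset hKX
  have hval : ∀ C : Set X, IsCompact C →
      (μ.restrict S).comap (Subtype.val : X → Z) C = μ (Subtype.val '' C) := fun C hC => by
    rw [comap_val_restrict_apply μ hS hSX hC.measurableSet, ← measure_inter_add_sdiff (Subtype.val '' C) hS,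
      hnull _ (hC.image continuous_subtype_val) (Subtype.coe_image_subset X C), add_zero]
  have hfin : IsFiniteMeasure ((μ.restrict S).comap (Subtype.val : X → Z)) := by
    constructor
    rw [comap_val_restrict_apply μ hS hSX MeasurableSet.univ]
    exact measure_lt_top _ _
  have hreg : ((μ.restrict S).comap (Subtype.val : X → Z)).InnerRegular := by
    constructor
    rintro _ ⟨B, hB, rfl⟩ r hr
    rw [comap_val_restrict_apply μ hS hSX (measurable_subtype_coe hB),
      Subtype.image_preimage_coe, Set.inter_comm X, Set.inter_assoc,
      Set.inter_eq_right.2 hSX] at hr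
    obtain ⟨F, hFsub, hF, hrF⟩ := MeasurableSet.exists_lt_isClosed_of_ne_top (hB.inter hS) (measure_ne_top μ _) hr
    -- `F` is exhausted by its intersections with finite unions of the sets `K n`.
    have hFU : F = ⋃ n, F ∩ K n := by
      rw [← Set.inter_iUnion]
      exact (Set.inter_eq_left.2 (hFsub.trans Set.inter_subset_right)).symm
    rw [hFU, measure_iUnion_eq_iSup_accumulate, lt_iSup_iff] at hrF
    obtain ⟨n, hn⟩ := hrF
    set C := Set.accumulate (fun n => F ∩ K n) n with hCdef
    have hC : IsCompact C :=
      (Set.finite_Iic n).isCompact_biUnion fun i _ => (hK i).inter_left hF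
    have hCF : C ⊆ F := Set.iUnion₂_subset fun _ _ => Set.inter_subset_left
    have hCX : C ⊆ X := hCF.trans (hFsub.trans (Set.inter_subset_right.trans hSX))
    have hC' : IsCompact (Subtype.val ⁻¹' C : Set X) :=
      Topology.IsInducing.subtypeVal.isCompact_preimage' hC (by simpa using hCX)
    refine ⟨Subtype.val ⁻¹' C, Set.preimage_mono (hCF.trans (hFsub.trans Set.inter_subset_left)),
      hC', ?_⟩
    rwa [hval _ hC', Subtype.image_preimage_coe, Set.inter_eq_right.2 hCX]
  refine ⟨_, ⟨hfin, hreg, hval⟩, fun m ⟨_, hm, hmK⟩ => Measure.ext fun A hA => ?_⟩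
  exact hm.innerRegular.eq_of_innerRegularWRT_of_forall_eq hreg.innerRegular
    (fun C hC => (hmK C hC).trans (hval C hC).symm) hA
end
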